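/- arXiv:0902.4723 — 2 statements merged into one kernel-verified Lean document; each statement's English description precedes it below -/
import Mathlib

section
/- The set of codes of pairs (R, S) of finite term rewriting systems over a common finite signature such that SN(R_top/S) holds is Π¹₁-complete. -/
/-!
Membership. A failure of `SN(R_top/S)` is an infinite sequence of steps of `→*_S · →_{R,ε}`. Each
such step can be presented by a finite certificate (the starting term, the `S`-steps, and the rule
and substitution of the root step), and whether two consecutive certificates fit together is a
primitive recursive property of their codes. Hence `SN(R_top/S)` says that every sequence of
certificates has two consecutive members that do not fit, which is a Π¹₁ condition
(`pi11_sntop`). The computability of this condition rests on terms being a primitive recursive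
datatype: recursion on terms is course-of-values recursion on their codes (`primrec_termRec`).

Hardness. For a Π¹₁ set `B` given by a decidable predicate `p`, we have `n ∉ B` iff the decidable
relation `extends₁ p n` on codes of finite sequences has an infinite chain
(`exists_chain_iff`). Let the code `c` decide this relation. The system `S = sRules c n` contains
rules evaluating codes, together with the rules `15(x, y) → 15(x, s(y))` and
`15(x, y) → 14(test(x, y), y)`, and the only rule of `R` is `14([0], y) → 15(y, 0)`, where `[0]` is
the answer of a successful test. So a chain `a₀, a₁, …` yields the infinite reduction
`15(a₀, 0) →* 14([0], a₁) → 15(a₁, 0) →* …`, because the evaluation rules compute the results of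
convergent computations (`reduces_evT`).

For the converse, the terms in an infinite reduction need not be well formed: the subterms may be
arbitrary. Terms are therefore interpreted in a strict partial algebra of numbers, lists and codes,
in which rewriting preserves defined values (`denote_step`). After the second root step, the
arguments of the root symbols always denote numbers, since the search for a successor starts at the
numeral zero and only increments it. The tests passed are then genuine ones, and the numbers denoted
form an infinite chain (`exists_successor`, `sntop_rules_iff`).
-/

/-- First-order terms over the fixed countably infinite set of variables
(named by naturals): a term is a variable or a function symbol (named by a
natural number) applied to a list of argument terms. -/
inductive Term : Type
  | var : ℕ → Term
  | app : ℕ → List Term → Term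

namespace Term

/-- Homomorphic application of a substitution (a map from variables to terms). -/
def subst (σ : ℕ → Term) : Term → Term
  | var n => σ n
  | app f ts => app f (ts.attach.map (fun x => subst σ x.1))
decreasing_by
  have := List.sizeOf_lt_of_mem x.2
  simp only [Term.app.sizeOf_spec]; omega

/-- An injective encoding of terms into the natural numbers. -/
def encode : Term → ℕ
  | var n => Nat.pair 0 n
  | app f ts => Nat.pair (f + 1) (Encodable.encode (ts.attach.map (fun x => encode x.1)))
decreasing_by
  have := List.sizeOf_lt_of_mem x.2
  simp only [Term.app.sizeOf_spec]; omega

end Term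

/-- `IsVarOf n t` holds iff the variable `n` occurs in the term `t`. -/
inductive IsVarOf (n : ℕ) : Term → Prop
  | var : IsVarOf n (.var n)
  | app {f : ℕ} {ts : List Term} {t : Term} : t ∈ ts → IsVarOf n t → IsVarOf n (.app f ts)

/-- A term is ground if no variable occurs in it. -/
def Ground (t : Term) : Prop := ∀ n : ℕ, ¬ IsVarOf n t

/-- A (finite) signature is presented by a finite list of pairs
(function symbol, arity); `WFSig` states that each symbol has a unique arity. -/
def WFSig (sig : List (ℕ × ℕ)) : Prop :=
  ∀ p ∈ sig, ∀ q ∈ sig, p.1 = q.1 → p.2 = q.2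

/-- `WFTerm sig t`: `t` is a term over the signature `sig`, i.e. every function
symbol occurring in `t` belongs to `sig` and is applied to the correct number
of arguments. -/
inductive WFTerm (sig : List (ℕ × ℕ)) : Term → Prop
  | var (n : ℕ) : WFTerm sig (.var n)
  | app {f : ℕ} {ts : List Term} : (f, ts.length) ∈ sig →
      (∀ t ∈ ts, WFTerm sig t) → WFTerm sig (.app f ts)

/-- `WFTRS sig R`: the finite list of rules `R` is a term rewriting system over
the signature `sig`: `sig` assigns unique arities, both sides of every rule are
terms over `sig`, no left-hand side is a variable, and every variable occurring
in a right-hand side occurs in the corresponding left-hand side. -/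
def WFTRS (sig : List (ℕ × ℕ)) (R : List (Term × Term)) : Prop :=
  WFSig sig ∧ ∀ p ∈ R, WFTerm sig p.1 ∧ WFTerm sig p.2 ∧
    (∀ n : ℕ, p.1 ≠ .var n) ∧ (∀ n : ℕ, IsVarOf n p.2 → IsVarOf n p.1)

/-- The one-step rewrite relation `→_R` of a TRS `R`: application of a rule
under a substitution, closed under arbitrary one-hole contexts (i.e. embedded
at any argument position at any depth). -/
inductive Rewrite (R : List (Term × Term)) : Term → Term → Prop
  | rule (l r : Term) (σ : ℕ → Term) (h : (l, r) ∈ R) :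
      Rewrite R (l.subst σ) (r.subst σ)
  | congr (f : ℕ) (ts₁ ts₂ : List Term) (t t' : Term) (h : Rewrite R t t') :
      Rewrite R (.app f (ts₁ ++ t :: ts₂)) (.app f (ts₁ ++ t' :: ts₂))

/-- Many-step rewriting `→*_R` (reflexive-transitive closure of `→_R`). -/
def Reduces (R : List (Term × Term)) : Term → Term → Prop :=
  Relation.ReflTransGen (Rewrite R)

/-- `t` is a normal form of `R` (admits no `→_R`-step). -/
def NormalForm (R : List (Term × Term)) (t : Term) : Prop := ∀ u : Term, ¬ Rewrite R t u

/-- `R` is strongly normalizing (terminating) on `t`: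
no infinite rewrite sequence starts at `t`. -/
def SNon (R : List (Term × Term)) (t : Term) : Prop :=
  ¬ ∃ f : ℕ → Term, f 0 = t ∧ ∀ n : ℕ, Rewrite R (f n) (f (n + 1))

/-- `R` is weakly normalizing on `t`: some reduction from `t` ends in a normal form. -/
def WNon (R : List (Term × Term)) (t : Term) : Prop :=
  ∃ s : Term, Reduces R t s ∧ NormalForm R s

/-- `R` is confluent (Church-Rosser) on `t`. -/
def CRon (R : List (Term × Term)) (t : Term) : Prop :=
  ∀ t₁ t₂ : Term, Reduces R t t₁ → Reduces R t t₂ →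
    ∃ d : Term, Reduces R t₁ d ∧ Reduces R t₂ d

/-- `R` is weakly confluent (weakly Church-Rosser) on `t`. -/
def WCRon (R : List (Term × Term)) (t : Term) : Prop :=
  ∀ t₁ t₂ : Term, Rewrite R t t₁ → Rewrite R t t₂ →
    ∃ d : Term, Reduces R t₁ d ∧ Reduces R t₂ d

/-- A root step `s →_{R,ε} t`: `s = ℓσ` and `t = rσ` for some rule `ℓ → r` of `R`. -/
def RootStep (R : List (Term × Term)) (s t : Term) : Prop :=
  ∃ (l r : Term) (σ : ℕ → Term), (l, r) ∈ R ∧ s = l.subst σ ∧ t = r.subst σ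

/-- Code of a rewrite rule. -/
def encodeRule (p : Term × Term) : ℕ := Nat.pair p.1.encode p.2.encode

/-- Code of a finite TRS. -/
def encodeTRS (R : List (Term × Term)) : ℕ := Encodable.encode (R.map encodeRule)

/-- Code of a finite signature. -/
def encodeSig (sig : List (ℕ × ℕ)) : ℕ := Encodable.encode sig

/-- A set `A ⊆ ℕ` is Σ⁰₁ (recursively enumerable) if it is the domain of a
partial computable function. -/
def Sigma01 (A : Set ℕ) : Prop :=
  ∃ f : ℕ →. ℕ, Nat.Partrec f ∧ ∀ n : ℕ, n ∈ A ↔ (f n).Dom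

/-- `B` is many-one reducible to `A`: there is a total computable `g` with
`n ∈ B ↔ g n ∈ A` for all `n`. -/
def ManyOneRed (B A : Set ℕ) : Prop :=
  ∃ g : ℕ → ℕ, Computable g ∧ ∀ n : ℕ, n ∈ B ↔ g n ∈ A

/-- `A` is Σ⁰₁-complete. -/
def Sigma01Complete (A : Set ℕ) : Prop :=
  Sigma01 A ∧ ∀ B : Set ℕ, Sigma01 B → ManyOneRed B A

/-- A set `A ⊆ ℕ` is Π⁰₂ if there is a decidable (computable) predicate
`P ⊆ ℕ³` with `n ∈ A ↔ ∀ x ∃ y, P n x y`. -/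
def Pi02 (A : Set ℕ) : Prop :=
  ∃ p : ℕ → ℕ → ℕ → Bool,
    Computable (fun x : ℕ × ℕ × ℕ => p x.1 x.2.1 x.2.2) ∧
    ∀ n : ℕ, n ∈ A ↔ ∀ x : ℕ, ∃ y : ℕ, p n x y = true

/-- `A` is Π⁰₂-complete. -/
def Pi02Complete (A : Set ℕ) : Prop :=
  Pi02 A ∧ ∀ B : Set ℕ, Pi02 B → ManyOneRed B A

/-- A set `A ⊆ ℕ` is Π¹₁ if there is a decidable (computable) predicate
`P ⊆ ℕ²` such that `n ∈ A` iff for every function `α : ℕ → ℕ` there exists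
`k` with `P n ⟨α 0, …, α (k-1)⟩`, where `⟨·⟩` is the (computable) coding of
finite sequences of naturals. -/
def Pi11 (A : Set ℕ) : Prop :=
  ∃ p : ℕ → ℕ → Bool,
    Computable (fun x : ℕ × ℕ => p x.1 x.2) ∧
    ∀ n : ℕ, n ∈ A ↔ ∀ α : ℕ → ℕ, ∃ k : ℕ,
      p n (Encodable.encode (List.ofFn (fun i : Fin k => α i))) = true

/-- `A` is Π¹₁-complete. -/
def Pi11Complete (A : Set ℕ) : Prop :=
  Pi11 A ∧ ∀ B : Set ℕ, Pi11 B → ManyOneRed B A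

/-- `SN(R_top/S)`: the composed relation `→*_S · →_{R,ε}` is terminating. -/
def SNtop (R S : List (Term × Term)) : Prop :=
  ¬ ∃ f : ℕ → Term, ∀ k : ℕ, ∃ u : Term, Reduces S (f k) u ∧ RootStep R u (f (k + 1))

/-- `SN^min(R_top/S)`: the relation consisting of all pairs `(s,t)` such that
`s (→*_S · →_{R,ε}) t` and `s` is `→_S`-terminating, is terminating. -/
def SNminTop (R S : List (Term × Term)) : Prop :=
  ¬ ∃ f : ℕ → Term, ∀ k : ℕ,
    (∃ u : Term, Reduces S (f k) u ∧ RootStep R u (f (k + 1))) ∧ SNon S (f k)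

/-! ### Terms as a primitive recursive datatype -/

theorem Term.ind {P : Term → Prop} (hv : ∀ n, P (.var n))
    (ha : ∀ f ts, (∀ t ∈ ts, P t) → P (.app f ts)) : ∀ t, P t
  | .var n => hv n
  | .app f ts => ha f ts (fun t _ => Term.ind hv ha t)

theorem Term.subst_var (σ : ℕ → Term) (n : ℕ) : (Term.var n).subst σ = σ n := by
  simp [Term.subst]

theorem Term.subst_app (σ : ℕ → Term) (f : ℕ) (ts : List Term) :
    (Term.app f ts).subst σ = .app f (ts.map (Term.subst σ)) := by
  simp [Term.subst]

theorem Term.encode_var (n : ℕ) : (Term.var n).encode = Nat.pair 0 n := by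
  simp [Term.encode]

theorem Term.encode_app (f : ℕ) (ts : List Term) :
    (Term.app f ts).encode = Nat.pair (f + 1) (Encodable.encode (ts.map Term.encode)) := by
  simp [Term.encode]

theorem Term.encode_injective : ∀ t u : Term, t.encode = u.encode → t = u := by
  refine Term.ind ?_ ?_
  · intro n u h
    cases u with
    | var m => simpa [Term.encode_var] using h
    | app g us => simp [Term.encode_var, Term.encode_app] at h
  · intro f ts ih u h
    cases u with
    | var m => simp [Term.encode_var, Term.encode_app] at h
    | app g us =>
      simp only [Term.encode_app, Nat.pair_eq_pair, Nat.add_right_cancel_iff,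
        Encodable.encode_inj] at h
      obtain ⟨rfl, h⟩ := h
      congr 1
      induction ts generalizing us with
      | nil => simpa using h.symm
      | cons t ts iht =>
        cases us with
        | nil => simp at h
        | cons u us =>
          simp only [List.map_cons, List.cons.injEq] at h
          rw [ih t (by simp) u h.1, iht (fun t ht => ih t (by simp [ht])) us h.2]

theorem mem_lt_encode {l : List ℕ} {a : ℕ} (h : a ∈ l) : a < Encodable.encode l := by
  induction l with
  | nil => simp at h
  | cons b l ih =>
    rw [Encodable.encode_list_cons]
    rcases List.mem_cons.1 h with rfl | h
    · exact Nat.lt_succ_of_le (Nat.left_le_pair _ _)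
    · exact (ih h).trans (Nat.lt_succ_of_le (Nat.right_le_pair _ _))

theorem Term.encode_surjective : Function.Surjective Term.encode := by
  intro n
  induction n using Nat.strong_induction_on with
  | _ n ih =>
    obtain ⟨u, w, rfl⟩ : ∃ u w, n = Nat.pair u w := ⟨_, _, (Nat.pair_unpair n).symm⟩
    cases u with
    | zero => exact ⟨.var w, Term.encode_var w⟩
    | succ f =>
      have hne : Nonempty Term := ⟨.var 0⟩
      have : ∀ i ∈ Denumerable.ofNat (List ℕ) w, ∃ t : Term, t.encode = i := by
        intro i hi
        refine ih i ?_
        have := mem_lt_encode hi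
        rw [Denumerable.encode_ofNat] at this
        exact this.trans_le (Nat.right_le_pair _ _)
      choose! g hg using this
      refine ⟨.app f ((Denumerable.ofNat (List ℕ) w).map g), ?_⟩
      rw [Term.encode_app, List.map_map]
      rw [List.map_congr_left (g := id) (by simpa using hg)]
      simp

/-- The coding of terms is a bijection with `ℕ`. -/
noncomputable def termEquiv : Term ≃ ℕ :=
  Equiv.ofBijective Term.encode ⟨fun t u h => Term.encode_injective t u h, Term.encode_surjective⟩

theorem termEquiv_apply (t : Term) : termEquiv t = t.encode := rfl

noncomputable instance : Primcodable Term := Primcodable.ofEquiv ℕ termEquiv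

theorem encode_term (t : Term) : Encodable.encode t = t.encode := rfl

theorem termEquiv_symm_var (n : ℕ) : termEquiv.symm (Nat.pair 0 n) = .var n := by
  rw [Equiv.symm_apply_eq, termEquiv_apply, Term.encode_var]

theorem termEquiv_symm_app (f w : ℕ) : termEquiv.symm (Nat.pair (f + 1) w) =
    .app f ((Denumerable.ofNat (List ℕ) w).map termEquiv.symm) := by
  rw [Equiv.symm_apply_eq, termEquiv_apply, Term.encode_app, List.map_map]
  rw [List.map_congr_left (g := id) (by intro i _; exact termEquiv.apply_symm_apply i)]
  simp

/-- Structural recursion on terms preserves primitive recursiveness. -/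
theorem primrec_termRec {α σ : Type*} [Primcodable α] [Primcodable σ] {F : α → Term → σ}
    {v : α → ℕ → σ} {g : α → ℕ × List σ → σ} (hv : Primrec₂ v) (hg : Primrec₂ g)
    (h1 : ∀ a n, F a (.var n) = v a n)
    (h2 : ∀ a f ts, F a (.app f ts) = g a (f, ts.map (F a))) : Primrec₂ F := by
  have key : Primrec₂ (fun a n => F a (termEquiv.symm n)) := by
    let G : α → List σ → Option σ := fun a L =>
      if L.length.unpair.1 = 0 then some (v a L.length.unpair.2)
      else some (g a (L.length.unpair.1 - 1,
        (Denumerable.ofNat (List ℕ) L.length.unpair.2).filterMap (fun i => L[i]?)))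
    have hlen : Primrec (fun p : α × List σ => p.2.length.unpair) :=
      Primrec.unpair.comp (Primrec.list_length.comp Primrec.snd)
    have hG : Primrec₂ G := by
      refine Primrec.ite (Primrec.eq.comp (Primrec.fst.comp hlen) (Primrec.const 0))
        (Primrec.option_some.comp (hv.comp Primrec.fst (Primrec.snd.comp hlen)))
        (Primrec.option_some.comp (hg.comp Primrec.fst (Primrec.pair
          (Primrec.nat_sub.comp (Primrec.fst.comp hlen) (Primrec.const 1)) ?_)))
      refine Primrec.listFilterMap ((Primrec.ofNat (List ℕ)).comp (Primrec.snd.comp hlen)) ?_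
      exact Primrec.list_getElem?.comp (Primrec.snd.comp Primrec.fst) Primrec.snd
    refine Primrec.nat_strong_rec _ hG ?_
    intro a n
    obtain ⟨u, w, rfl⟩ : ∃ u w, n = Nat.pair u w := ⟨_, _, (Nat.pair_unpair n).symm⟩
    cases u with
    | zero => simp [G, termEquiv_symm_var, h1]
    | succ f =>
      have hf : (Denumerable.ofNat (List ℕ) w).filterMap
          (fun i => ((List.range (Nat.pair (f + 1) w)).map (fun n => F a (termEquiv.symm n)))[i]?)
          = (Denumerable.ofNat (List ℕ) w).map (fun i => F a (termEquiv.symm i)) := by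
        rw [← List.filterMap_eq_map]
        refine List.filterMap_congr ?_
        intro i hi
        have := mem_lt_encode hi
        rw [Denumerable.encode_ofNat] at this
        simp [this.trans_le (Nat.right_le_pair (f + 1) w)]
      simp only [G, List.length_map, List.length_range, Nat.unpair_pair, hf,
        termEquiv_symm_app, h2, List.map_map]
      simp [Function.comp_def]
  have := key.comp Primrec.fst ((Primrec.encode (α := Term)).comp (Primrec.snd (α := α)))
  refine Primrec.of_eq this ?_
  intro p
  show F p.1 (termEquiv.symm (termEquiv p.2)) = _
  simp

/-! ### Computability of the syntactic operations -/

theorem encode_list_term (ts : List Term) :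
    Encodable.encode ts = Encodable.encode (ts.map Term.encode) := by
  induction ts with
  | nil => rfl
  | cons t ts ih => simp [Encodable.encode_list_cons, ih, encode_term]

theorem primrec_var : Primrec Term.var := by
  refine Primrec.encode_iff.1 ?_
  exact (Primrec₂.natPair.comp (Primrec.const 0) Primrec.id).of_eq
    (fun n => by rw [encode_term, Term.encode_var]; rfl)

theorem primrec_app : Primrec₂ Term.app := by
  refine Primrec.encode_iff.1 ?_
  refine (Primrec₂.natPair.comp (Primrec.succ.comp Primrec.fst)
    (Primrec.encode.comp Primrec.snd)).of_eq (fun p => ?_)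
  rw [encode_term, Term.encode_app, encode_list_term]

theorem IsVarOf.le_encode {n : ℕ} {t : Term} (h : IsVarOf n t) : n ≤ t.encode := by
  induction h with
  | var => rw [Term.encode_var]; exact Nat.right_le_pair _ _
  | @app f ts t ht _ ih =>
    rw [Term.encode_app]
    exact ih.trans ((mem_lt_encode (List.mem_map_of_mem ht)).le.trans (Nat.right_le_pair _ _))

theorem isVarOf_var {n m : ℕ} : IsVarOf n (.var m) ↔ n = m := by
  constructor
  · intro h; cases h; rfl
  · rintro rfl; exact .var

theorem isVarOf_app {n f : ℕ} {ts : List Term} :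
    IsVarOf n (.app f ts) ↔ ∃ t ∈ ts, IsVarOf n t := by
  constructor
  · intro h; cases h with | app ht h => exact ⟨_, ht, h⟩
  · rintro ⟨t, ht, h⟩; exact .app ht h

theorem wfTerm_app {sig : List (ℕ × ℕ)} {f : ℕ} {ts : List Term} :
    WFTerm sig (.app f ts) ↔ (f, ts.length) ∈ sig ∧ ∀ t ∈ ts, WFTerm sig t := by
  constructor
  · intro h; cases h with | app h1 h2 => exact ⟨h1, h2⟩
  · rintro ⟨h1, h2⟩; exact .app h1 h2

theorem subst_congr {σ σ' : ℕ → Term} :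
    ∀ t : Term, (∀ n, IsVarOf n t → σ n = σ' n) → t.subst σ = t.subst σ' := by
  refine Term.ind ?_ ?_
  · intro n h; simpa [Term.subst_var] using h n .var
  · intro f ts ih h
    rw [Term.subst_app, Term.subst_app]
    congr 1
    exact List.map_congr_left fun t ht => ih t ht fun n hn => h n (.app ht hn)

theorem subst_subst (σ τ : ℕ → Term) :
    ∀ t : Term, (t.subst σ).subst τ = t.subst (fun n => (σ n).subst τ) := by
  refine Term.ind ?_ ?_
  · intro n; simp [Term.subst_var]
  · intro f ts ih
    simp only [Term.subst_app, List.map_map]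
    congr 1
    exact List.map_congr_left fun t ht => ih t ht

theorem subst_id : ∀ t : Term, t.subst Term.var = t := by
  refine Term.ind ?_ ?_
  · intro n; simp [Term.subst_var]
  · intro f ts ih
    rw [Term.subst_app]
    congr 1
    exact (List.map_congr_left ih).trans (List.map_id ts)

/-- Substitution by a finite list of terms: variable `n` is replaced by the `n`-th entry, and the
variables beyond the list are shifted down by its length. In particular `substL [a] C` plugs `a`
into the holes (occurrences of variable `0`) of the context `C`. -/
noncomputable def substL (τ : List Term) (t : Term) : Term :=
  t.subst fun n => τ[n]?.getD (.var (n - τ.length))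

theorem primrec_substL : Primrec₂ substL := by
  refine primrec_termRec (v := fun τ n => τ[n]?.getD (.var (n - τ.length)))
    (g := fun _ p => .app p.1 p.2) ?_ ?_ ?_ ?_
  · refine Primrec.option_getD.comp Primrec.list_getElem? ?_
    exact primrec_var.comp
      (Primrec.nat_sub.comp Primrec.snd (Primrec.list_length.comp Primrec.fst))
  · exact primrec_app.comp (Primrec.fst.comp Primrec.snd) (Primrec.snd.comp Primrec.snd)
  · intro a n; simp [substL, Term.subst_var]
  · intro a f ts; simp [substL, Term.subst_app]

theorem primrec_mem {α : Type*} [Primcodable α] : PrimrecRel (fun (a : α) (L : List α) => a ∈ L) :=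
  ((PrimrecRel.exists_mem_list (R := fun a b : α => a = b) Primrec.eq).comp
    Primrec.snd Primrec.fst).of_eq (by simp)

theorem primrec_wfTerm : PrimrecRel WFTerm := by
  classical
  suffices h : Primrec₂ (fun sig t => decide (WFTerm sig t)) from h.primrecRel
  refine primrec_termRec (v := fun _ _ => true)
    (g := fun sig p => decide ((p.1, p.2.length) ∈ sig) && decide (∀ b ∈ p.2, b = true))
    (Primrec.const true) ?_ ?_ ?_
  · refine Primrec.and.comp ?_ ?_
    · exact (primrec_mem.comp (Primrec.pair (Primrec.fst.comp Primrec.snd)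
        (Primrec.list_length.comp (Primrec.snd.comp Primrec.snd))) Primrec.fst).decide
    · have : PrimrecPred (fun b : Bool => b = true) := Primrec.eq.comp Primrec.id (Primrec.const _)
      exact (this.forall_mem_list.comp (Primrec.snd.comp Primrec.snd)).decide
  · intro sig n; simp [WFTerm.var]
  · intro sig f ts
    rw [Bool.eq_iff_iff]
    simp [wfTerm_app]

theorem primrec_isVarOf : PrimrecRel IsVarOf := by
  classical
  suffices h : Primrec₂ (fun n t => decide (IsVarOf n t)) from h.primrecRel
  refine primrec_termRec (v := fun n m => decide (n = m))
    (g := fun _ p => decide (∃ b ∈ p.2, b = true)) Primrec.eq.decide ?_ ?_ ?_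
  · have : PrimrecPred (fun b : Bool => b = true) := Primrec.eq.comp Primrec.id (Primrec.const _)
    exact (this.exists_mem_list.comp (Primrec.snd.comp Primrec.snd)).decide
  · intro n m; simp [isVarOf_var]
  · intro n f ts
    rw [Bool.eq_iff_iff]
    simp [isVarOf_app]

theorem PrimrecPred.imp {α : Type*} [Primcodable α] {p q : α → Prop} (hp : PrimrecPred p)
    (hq : PrimrecPred q) : PrimrecPred fun a => p a → q a :=
  (hp.not.or hq).of_eq fun _ => imp_iff_not_or.symm

/-- Quantification over a computed list, with a parameter, is primitive recursive. -/
theorem PrimrecPred.ball {α β : Type*} [Primcodable α] [Primcodable β] {L : α → List β}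
    {p : β → α → Prop} (hL : Primrec L) (hp : PrimrecRel p) :
    PrimrecPred fun a => ∀ b ∈ L a, p b a :=
  hp.forall_mem_list.comp hL Primrec.id

theorem primrec_wfSig : PrimrecPred WFSig := by
  refine PrimrecPred.ball Primrec.id ?_
  refine PrimrecPred.ball (p := fun (q : ℕ × ℕ) (x : (ℕ × ℕ) × List (ℕ × ℕ)) => x.1.1 = q.1 → x.1.2 = q.2) Primrec.snd ?_
  refine PrimrecPred.imp ?_ ?_
  · exact Primrec.eq.comp (Primrec.fst.comp (Primrec.fst.comp Primrec.snd))
      (Primrec.fst.comp Primrec.fst)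
  · exact Primrec.eq.comp (Primrec.snd.comp (Primrec.fst.comp Primrec.snd))
      (Primrec.snd.comp Primrec.fst)

theorem primrec_wfTRS : PrimrecRel WFTRS := by
  have hv : PrimrecPred (fun p : Term × Term => ∀ n, p.1 ≠ .var n) := by
    have h : PrimrecPred (fun p : Term × Term =>
        ∀ n ∈ List.range (Encodable.encode p.1 + 1), p.1 ≠ .var n) := by
      refine PrimrecPred.ball (p := fun n (p : Term × Term) => p.1 ≠ .var n) ?_ ?_
      · exact Primrec.list_range.comp
          (Primrec.succ.comp (Primrec.encode.comp Primrec.fst))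
      · exact PrimrecPred.not (Primrec.eq.comp (Primrec.fst.comp Primrec.snd)
          (primrec_var.comp Primrec.fst))
    refine h.of_eq fun p => ⟨fun h n hn => ?_, fun h n _ => h n⟩
    refine h n ?_ hn
    rw [List.mem_range, Nat.lt_succ_iff, hn]
    exact IsVarOf.var.le_encode
  have hu : PrimrecPred (fun p : Term × Term => ∀ n, IsVarOf n p.2 → IsVarOf n p.1) := by
    have h : PrimrecPred (fun p : Term × Term =>
        ∀ n ∈ List.range (Encodable.encode p.2 + 1), IsVarOf n p.2 → IsVarOf n p.1) := by
      refine PrimrecPred.ball (p := fun n (p : Term × Term) => IsVarOf n p.2 → IsVarOf n p.1) ?_ ?_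
      · exact Primrec.list_range.comp
          (Primrec.succ.comp (Primrec.encode.comp Primrec.snd))
      · exact PrimrecPred.imp
          (primrec_isVarOf.comp Primrec.fst (Primrec.snd.comp Primrec.snd))
          (primrec_isVarOf.comp Primrec.fst (Primrec.fst.comp Primrec.snd))
    refine h.of_eq fun p => ⟨fun h n hn => ?_, fun h n _ => h n⟩
    refine h n ?_ hn
    rw [List.mem_range, Nat.lt_succ_iff]
    exact hn.le_encode
  refine PrimrecPred.and (primrec_wfSig.comp Primrec.fst) ?_
  refine PrimrecPred.ball (p := fun (p : Term × Term) (x : List (ℕ × ℕ) × List (Term × Term)) =>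
    WFTerm x.1 p.1 ∧ WFTerm x.1 p.2 ∧
    (∀ n : ℕ, p.1 ≠ .var n) ∧ (∀ n : ℕ, IsVarOf n p.2 → IsVarOf n p.1)) Primrec.snd ?_
  refine PrimrecPred.and ?_ (PrimrecPred.and ?_ (PrimrecPred.and ?_ ?_))
  · exact primrec_wfTerm.comp (Primrec.fst.comp Primrec.snd) (Primrec.fst.comp Primrec.fst)
  · exact primrec_wfTerm.comp (Primrec.fst.comp Primrec.snd) (Primrec.snd.comp Primrec.fst)
  · exact hv.comp Primrec.fst
  · exact hu.comp Primrec.fst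

/-! ### Finite witnesses of rewrite steps -/

theorem Reduces.app {S : List (Term × Term)} (f : ℕ) {ts us : List Term}
    (h : List.Forall₂ (Reduces S) ts us) : Reduces S (.app f ts) (.app f us) := by
  suffices H : ∀ pre : List Term, Reduces S (.app f (pre ++ ts)) (.app f (pre ++ us)) from H []
  induction h with
  | nil => intro pre; exact .refl
  | @cons t u ts us htu _ ih =>
    intro pre
    have h1 : Reduces S (.app f (pre ++ t :: ts)) (.app f (pre ++ u :: ts)) :=
      Relation.ReflTransGen.lift (r := Rewrite S) (fun x => Term.app f (pre ++ x :: ts))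
        (fun a b hab => Rewrite.congr f pre ts a b hab) t u htu
    have h2 := ih (pre ++ [u])
    simp only [List.append_assoc, List.singleton_append] at h2
    exact h1.trans h2

theorem Reduces.subst {S : List (Term × Term)} {σ τ : ℕ → Term} (h : ∀ n, Reduces S (σ n) (τ n)) :
    ∀ t : Term, Reduces S (t.subst σ) (t.subst τ) := by
  refine Term.ind ?_ ?_
  · intro n; simpa [Term.subst_var] using h n
  · intro f ts ih
    rw [Term.subst_app, Term.subst_app]
    refine Reduces.app f ?_
    rw [List.forall₂_map_left_iff, List.forall₂_map_right_iff]
    exact List.forall₂_same.2 ih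

theorem Reduces.substL_single {S : List (Term × Term)} {a b : Term} (h : Reduces S a b)
    (C : Term) : Reduces S (substL [a] C) (substL [b] C) := by
  refine Reduces.subst (fun n => ?_) C
  cases n with
  | zero => simpa using h
  | succ n => exact .refl

theorem exists_substL (l r : Term) (σ : ℕ → Term) :
    ∃ τ : List Term, l.subst σ = substL τ l ∧ r.subst σ = substL τ r := by
  refine ⟨(List.range (max l.encode r.encode + 1)).map σ, ?_, ?_⟩
  · refine subst_congr l fun n hn => ?_
    have : n < max l.encode r.encode + 1 :=
      Nat.lt_succ_of_le (hn.le_encode.trans (le_max_left _ _))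
    simp [this]
  · refine subst_congr r fun n hn => ?_
    have : n < max l.encode r.encode + 1 :=
      Nat.lt_succ_of_le (hn.le_encode.trans (le_max_right _ _))
    simp [this]

/-- Renaming `n ↦ n + 1`, which makes room for the hole variable `0`. -/
noncomputable def shift (t : Term) : Term := t.subst fun n => .var (n + 1)

theorem substL_shift (a t : Term) : substL [a] (shift t) = t := by
  rw [substL, shift, subst_subst]
  simp only [Term.subst_var]
  simpa using subst_id t

theorem substL_app (τ : List Term) (f : ℕ) (ts : List Term) :
    substL τ (.app f ts) = .app f (ts.map (substL τ)) := by
  rw [substL, Term.subst_app]; rfl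

theorem map_substL_shift (a : Term) (ts : List Term) :
    (ts.map shift).map (substL [a]) = ts := by
  rw [List.map_map]
  exact (List.map_congr_left fun t _ => substL_shift a t).trans (List.map_id ts)

theorem Rewrite.exists_witness {S : List (Term × Term)} {s t : Term} (h : Rewrite S s t) :
    ∃ (C l r : Term) (τ : List Term), (l, r) ∈ S ∧
      s = substL [substL τ l] C ∧ t = substL [substL τ r] C := by
  induction h with
  | rule l r σ h =>
    obtain ⟨τ, h1, h2⟩ := exists_substL l r σ
    refine ⟨.var 0, l, r, τ, h, ?_, ?_⟩
    · simpa [substL, Term.subst_var] using h1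
    · simpa [substL, Term.subst_var] using h2
  | congr f ts₁ ts₂ t t' _ ih =>
    obtain ⟨C, l, r, τ, h, rfl, rfl⟩ := ih
    refine ⟨.app f (ts₁.map shift ++ C :: ts₂.map shift), l, r, τ, h, ?_, ?_⟩
    · rw [substL_app, List.map_append, List.map_cons, map_substL_shift, map_substL_shift]
    · rw [substL_app, List.map_append, List.map_cons, map_substL_shift, map_substL_shift]

/-- The data of one rewrite step: a context, the rule applied and a finite substitution. -/
abbrev StepData : Type := Term × Term × Term × List Term

open Classical in
/-- Perform the rewrite step described by `w` on `s`, if it is applicable. -/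
noncomputable def stepS (S : List (Term × Term)) (s : Term) (w : StepData) : Option Term :=
  if (w.2.1, w.2.2.1) ∈ S ∧ s = substL [substL w.2.2.2 w.2.1] w.1 then
    some (substL [substL w.2.2.2 w.2.2.1] w.1) else none

/-- Perform a list of rewrite steps. -/
noncomputable def chain (S : List (Term × Term)) (s : Term) (ws : List StepData) : Option Term :=
  ws.foldl (fun o w => o.bind fun t => stepS S t w) (some s)

theorem chain_concat (S : List (Term × Term)) (s : Term) (ws : List StepData) (w : StepData) :
    chain S s (ws ++ [w]) = (chain S s ws).bind fun t => stepS S t w := by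
  simp [chain]

theorem reduces_iff_chain {S : List (Term × Term)} {s t : Term} :
    Reduces S s t ↔ ∃ ws, chain S s ws = some t := by
  constructor
  · intro h
    induction h with
    | refl => exact ⟨[], rfl⟩
    | tail _ h ih =>
      obtain ⟨ws, hws⟩ := ih
      obtain ⟨C, l, r, τ, hS, rfl, rfl⟩ := h.exists_witness
      refine ⟨ws ++ [(C, l, r, τ)], ?_⟩
      rw [chain_concat, hws]
      simp [stepS, hS]
  · rintro ⟨ws, h⟩
    induction ws using List.reverseRecOn generalizing t with
    | nil => simp [chain] at h; subst h; exact .refl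
    | append_singleton ws w ih =>
      rw [chain_concat, Option.bind_eq_some_iff] at h
      obtain ⟨u, hu, h⟩ := h
      refine (ih hu).trans ?_
      unfold stepS at h
      split_ifs at h with hc
      obtain ⟨hS, rfl⟩ := hc
      obtain rfl := Option.some.inj h
      exact Reduces.substL_single (.single (Rewrite.rule _ _ _ hS)) _

theorem rootStep_iff {R : List (Term × Term)} {s t : Term} :
    RootStep R s t ↔ ∃ (l r : Term) (τ : List Term),
      (l, r) ∈ R ∧ s = substL τ l ∧ t = substL τ r := by
  constructor
  · rintro ⟨l, r, σ, h, rfl, rfl⟩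
    obtain ⟨τ, h1, h2⟩ := exists_substL l r σ
    exact ⟨l, r, τ, h, h1, h2⟩
  · rintro ⟨l, r, τ, h, rfl, rfl⟩
    exact ⟨l, r, _, h, rfl, rfl⟩

theorem primrec_chain : Primrec (fun x : List (Term × Term) × Term × List StepData =>
    chain x.1 x.2.1 x.2.2) := by
  classical
  refine Primrec.list_foldl (h := fun x p => p.1.bind fun t => stepS x.1 t p.2)
    (Primrec.snd.comp Primrec.snd) (Primrec.option_some.comp (Primrec.fst.comp Primrec.snd)) ?_
  refine Primrec.option_bind (Primrec.fst.comp Primrec.snd) ?_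
  have hS : Primrec (fun y : ((List (Term × Term) × Term × List StepData) ×
    Option Term × StepData) × Term => y.1.1.1) := Primrec.fst.comp (Primrec.fst.comp Primrec.fst)
  have hw : Primrec (fun y : ((List (Term × Term) × Term × List StepData) ×
    Option Term × StepData) × Term => y.1.2.2) := Primrec.snd.comp (Primrec.snd.comp Primrec.fst)
  have hl := Primrec.fst.comp (Primrec.snd.comp hw)
  have hr := Primrec.fst.comp (Primrec.snd.comp (Primrec.snd.comp hw))
  have ht := Primrec.snd.comp (Primrec.snd.comp (Primrec.snd.comp hw))
  have hC := Primrec.fst.comp hw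
  refine Primrec.ite (PrimrecPred.and (primrec_mem.comp (Primrec.pair hl hr) hS)
    (Primrec.eq.comp Primrec.snd (primrec_substL.comp
      (Primrec.list_cons.comp (primrec_substL.comp ht hl) (Primrec.const [])) hC)))
    (Primrec.option_some.comp (primrec_substL.comp
      (Primrec.list_cons.comp (primrec_substL.comp ht hr) (Primrec.const [])) hC))
    (Primrec.const none)

/-! ### Membership in Π¹₁ -/

/-- The data accompanying one step of `→*_S · →_{R,ε}`: the starting term, the list of `S`-steps,
and the rule and substitution of the final root step. -/
abbrev StageData : Type := Term × List StepData × Term × Term × List Term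

/-- `x` describes a valid step of `→*_S · →_{R,ε}` whose result is the starting term of `y`. -/
def Linked (P : List (ℕ × ℕ) × List (Term × Term) × List (Term × Term)) (x y : StageData) : Prop :=
  (x.2.2.1, x.2.2.2.1) ∈ P.2.1 ∧
    chain P.2.2 x.1 x.2.1 = some (substL x.2.2.2.2 x.2.2.1) ∧ y.1 = substL x.2.2.2.2 x.2.2.2.1

/-- The problem coded by `N`. -/
noncomputable def problem (N : ℕ) : List (ℕ × ℕ) × List (Term × Term) × List (Term × Term) :=
  (Encodable.decode N).getD ([], [], [])

/-- The stage data coded by `N`. -/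
noncomputable def stage (N : ℕ) : StageData :=
  (Encodable.decode N).getD (.var 0, [], .var 0, .var 0, [])

theorem stage_encode (w : StageData) : stage (Encodable.encode w) = w := by
  simp [stage]

theorem encode_rules (R : List (Term × Term)) : Encodable.encode R = encodeTRS R := by
  unfold encodeTRS
  induction R with
  | nil => rfl
  | cons p R ih => rw [List.map_cons, Encodable.encode_list_cons, Encodable.encode_list_cons, ih]; rfl

theorem problem_encode (sig : List (ℕ × ℕ)) (R S : List (Term × Term)) :
    problem (Nat.pair (encodeSig sig) (Nat.pair (encodeTRS R) (encodeTRS S))) = (sig, R, S) := by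
  have : Nat.pair (encodeSig sig) (Nat.pair (encodeTRS R) (encodeTRS S)) =
      Encodable.encode (sig, R, S) := by
    rw [Encodable.encode_prod_val, Encodable.encode_prod_val, encode_rules, encode_rules]; rfl
  rw [this, problem, Encodable.encodek]; rfl

theorem exists_problem (N : ℕ) : ∃ (sig : List (ℕ × ℕ)) (R S : List (Term × Term)),
    N = Nat.pair (encodeSig sig) (Nat.pair (encodeTRS R) (encodeTRS S)) := by
  let _ : Denumerable Term := Denumerable.ofEquiv ℕ termEquiv
  have hR : ∀ m, ∃ R, encodeTRS R = m := fun m =>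
    ⟨Denumerable.ofNat (List (Term × Term)) m, by
      rw [← encode_rules]; exact Denumerable.encode_ofNat m⟩
  obtain ⟨R, hR'⟩ := hR N.unpair.2.unpair.1
  obtain ⟨S, hS'⟩ := hR N.unpair.2.unpair.2
  refine ⟨Denumerable.ofNat _ N.unpair.1, R, S, ?_⟩
  rw [hR', hS', encodeSig, Denumerable.encode_ofNat, Nat.pair_unpair, Nat.pair_unpair]

theorem primrec_linked : PrimrecPred (fun x : (List (ℕ × ℕ) × List (Term × Term) ×
    List (Term × Term)) × StageData × StageData => Linked x.1 x.2.1 x.2.2) := by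
  have hx : Primrec (fun x : (List (ℕ × ℕ) × List (Term × Term) ×
    List (Term × Term)) × StageData × StageData => x.2.1) := Primrec.fst.comp Primrec.snd
  have hl := Primrec.fst.comp (Primrec.snd.comp (Primrec.snd.comp hx))
  have hr := Primrec.fst.comp (Primrec.snd.comp (Primrec.snd.comp (Primrec.snd.comp hx)))
  have ht := Primrec.snd.comp (Primrec.snd.comp (Primrec.snd.comp (Primrec.snd.comp hx)))
  refine PrimrecPred.and ?_ (PrimrecPred.and ?_ ?_)
  · exact primrec_mem.comp (Primrec.pair hl hr) (Primrec.fst.comp (Primrec.snd.comp Primrec.fst))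
  · exact Primrec.eq.comp (primrec_chain.comp (Primrec.pair
      (Primrec.snd.comp (Primrec.snd.comp Primrec.fst))
      (Primrec.pair (Primrec.fst.comp hx) (Primrec.fst.comp (Primrec.snd.comp hx)))))
      (Primrec.option_some.comp (primrec_substL.comp ht hl))
  · exact Primrec.eq.comp (Primrec.fst.comp (Primrec.snd.comp Primrec.snd))
      (primrec_substL.comp ht hr)

theorem sntop_iff {P : List (ℕ × ℕ) × List (Term × Term) × List (Term × Term)} :
    SNtop P.2.1 P.2.2 ↔ ∀ w : ℕ → StageData, ∃ k, ¬ Linked P (w k) (w (k + 1)) := by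
  constructor
  · intro h w
    by_contra! hw
    refine h ⟨fun k => (w k).1, fun k => ?_⟩
    obtain ⟨h1, h2, h3⟩ := hw k
    exact ⟨_, reduces_iff_chain.2 ⟨_, h2⟩, rootStep_iff.2 ⟨_, _, _, h1, rfl, h3⟩⟩
  · rintro h ⟨f, hf⟩
    have : ∀ k, ∃ w : StageData, w.1 = f k ∧ ∀ y : StageData, y.1 = f (k + 1) → Linked P w y := by
      intro k
      obtain ⟨u, h1, h2⟩ := hf k
      obtain ⟨ws, hws⟩ := reduces_iff_chain.1 h1
      obtain ⟨l, r, τ, hR, rfl, ht⟩ := rootStep_iff.1 h2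
      exact ⟨(f k, ws, l, r, τ), rfl, fun y hy => ⟨hR, hws, hy.trans ht⟩⟩
    choose w hw1 hw2 using this
    obtain ⟨k, hk⟩ := h w
    exact hk (hw2 k _ (hw1 (k + 1)))

/-- The problem coded by `N` is well formed, and the last two entries of `L` are not linked. -/
def Refuted (N : ℕ) (L : List ℕ) : Prop :=
  (WFTRS (problem N).1 (problem N).2.1 ∧ WFTRS (problem N).1 (problem N).2.2) ∧ 2 ≤ L.length ∧
    ¬ Linked (problem N) (stage (L.getD (L.length - 2) 0)) (stage (L.getD (L.length - 1) 0))

theorem primrec_refuted : PrimrecPred (fun x : ℕ × List ℕ => Refuted x.1 x.2) := by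
  have hP : Primrec (fun x : ℕ × List ℕ => problem x.1) :=
    Primrec.option_getD.comp (Primrec.decode.comp Primrec.fst) (Primrec.const _)
  have hst : Primrec stage :=
    Primrec.option_getD.comp (Primrec.decode.comp Primrec.id) (Primrec.const _)
  have hlen : Primrec (fun x : ℕ × List ℕ => x.2.length) := Primrec.list_length.comp Primrec.snd
  have hget : ∀ c : ℕ, Primrec (fun x : ℕ × List ℕ => stage (x.2.getD (x.2.length - c) 0)) :=
    fun c => hst.comp ((Primrec.list_getD 0).comp Primrec.snd
      (Primrec.nat_sub.comp hlen (Primrec.const c)))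
  refine PrimrecPred.and (PrimrecPred.and ?_ ?_) (PrimrecPred.and ?_ ?_)
  · exact primrec_wfTRS.comp (Primrec.fst.comp hP) (Primrec.fst.comp (Primrec.snd.comp hP))
  · exact primrec_wfTRS.comp (Primrec.fst.comp hP) (Primrec.snd.comp (Primrec.snd.comp hP))
  · exact Primrec.nat_le.comp (Primrec.const 2) hlen
  · exact (primrec_linked.comp (Primrec.pair hP (Primrec.pair (hget 2) (hget 1)))).not

theorem pi11_sntop : Pi11 { n : ℕ | ∃ (sig : List (ℕ × ℕ)) (R S : List (Term × Term)),
    WFTRS sig R ∧ WFTRS sig S ∧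
      n = Nat.pair (encodeSig sig) (Nat.pair (encodeTRS R) (encodeTRS S)) ∧ SNtop R S } := by
  classical
  refine ⟨fun N c => decide (Refuted N (Denumerable.ofNat (List ℕ) c)), ?_, ?_⟩
  · exact (primrec_refuted.comp
      (Primrec.pair Primrec.fst ((Primrec.ofNat _).comp Primrec.snd))).decide.to_comp
  intro N
  simp only [Denumerable.ofNat_encode, decide_eq_true_eq, Set.mem_ofPred_eq]
  obtain ⟨sig, R, S, rfl⟩ := exists_problem N
  have hp := problem_encode sig R S
  constructor
  · rintro ⟨sig', R', S', h1, h2, h3, h4⟩ α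
    have hp' := problem_encode sig' R' S'
    rw [← h3] at hp'
    obtain ⟨k, hk⟩ := (sntop_iff (P := (sig', R', S'))).1 h4 (fun k => stage (α k))
    refine ⟨k + 2, ?_⟩
    rw [Refuted, hp']
    refine ⟨⟨h1, h2⟩, by simp, ?_⟩
    simpa [-List.ofFn_succ] using hk
  · intro h
    obtain ⟨k, hk⟩ := h (fun _ => 0)
    rw [Refuted, hp] at hk
    refine ⟨sig, R, S, hk.1.1, hk.1.2, rfl, ?_⟩
    refine (sntop_iff (P := (sig, R, S))).2 fun w => ?_
    obtain ⟨k, hk⟩ := h (fun k => Encodable.encode (w k))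
    rw [Refuted, hp] at hk
    obtain ⟨-, hlen, hk⟩ := hk
    rw [List.length_ofFn] at hlen
    obtain ⟨j, rfl⟩ : ∃ j, k = j + 2 := ⟨k - 2, by omega⟩
    refine ⟨j, ?_⟩
    simpa [stage_encode, -List.ofFn_succ] using hk

/-! ### A rewriting system evaluating list-based codes -/

open Turing.ToPartrec (Code)

/-- The unary numeral of `n`. -/
def numT : ℕ → Term
  | 0 => .app 0 []
  | n + 1 => .app 1 [numT n]

/-- The term representing a list of numbers. -/
def listT : List ℕ → Term
  | [] => .app 2 []
  | n :: l => .app 3 [numT n, listT l]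

/-- The term representing a code. -/
def codeT : Code → Term
  | .zero' => .app 4 []
  | .succ => .app 5 []
  | .tail => .app 6 []
  | .cons f g => .app 7 [codeT f, codeT g]
  | .comp f g => .app 8 [codeT f, codeT g]
  | .case f g => .app 9 [codeT f, codeT g]
  | .fix f => .app 10 [codeT f]

/-- `evT c l` is the application of the code `c` to the argument list `l`. -/
abbrev evT (c l : Term) : Term := .app 11 [c, l]

/-- The signature of the systems used in the reduction. Symbols `0`–`3` build numerals and lists,
`4`–`10` build codes, `11` is evaluation and `12`, `13` are its auxiliary symbols; `14` and `15`
are the root symbols. -/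
def theSig : List (ℕ × ℕ) :=
  [(0, 0), (1, 1), (2, 0), (3, 2), (4, 0), (5, 0), (6, 0), (7, 2), (8, 2), (9, 2), (10, 1),
    (11, 2), (12, 2), (13, 2), (14, 2), (15, 2)]

/-- The rules evaluating codes. -/
def evRules : List (Term × Term) :=
  [(evT (.app 4 []) (.var 0), .app 3 [.app 0 [], .var 0]),
   (evT (.app 5 []) (.app 2 []), .app 3 [.app 1 [.app 0 []], .app 2 []]),
   (evT (.app 5 []) (.app 3 [.var 0, .var 1]), .app 3 [.app 1 [.var 0], .app 2 []]),
   (evT (.app 6 []) (.app 2 []), .app 2 []),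
   (evT (.app 6 []) (.app 3 [.var 0, .var 1]), .var 1),
   (evT (.app 7 [.var 0, .var 1]) (.var 2),
     .app 12 [evT (.var 0) (.var 2), evT (.var 1) (.var 2)]),
   (.app 12 [.app 2 [], .var 0], .app 3 [.app 0 [], .var 0]),
   (.app 12 [.app 3 [.var 0, .var 1], .var 2], .app 3 [.var 0, .var 2]),
   (evT (.app 8 [.var 0, .var 1]) (.var 2), evT (.var 0) (evT (.var 1) (.var 2))),
   (evT (.app 9 [.var 0, .var 1]) (.app 2 []), evT (.var 0) (.app 2 [])),
   (evT (.app 9 [.var 0, .var 1]) (.app 3 [.app 0 [], .var 2]), evT (.var 0) (.var 2)),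
   (evT (.app 9 [.var 0, .var 1]) (.app 3 [.app 1 [.var 2], .var 3]),
     evT (.var 1) (.app 3 [.var 2, .var 3])),
   (evT (.app 10 [.var 0]) (.var 1), .app 13 [.var 0, evT (.var 0) (.var 1)]),
   (.app 13 [.var 0, .app 2 []], .app 2 []),
   (.app 13 [.var 0, .app 3 [.app 0 [], .var 1]], .var 1),
   (.app 13 [.var 0, .app 3 [.app 1 [.var 1], .var 2]], evT (.app 10 [.var 0]) (.var 2))]

/-- The term testing whether `y` is a successor of `x` in the relation decided by `c` at `n`. -/
def testT (c : Code) (n : ℕ) (x y : Term) : Term :=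
  evT (codeT c) (.app 3 [numT n, .app 3 [x, .app 3 [y, .app 2 []]]])

/-- The system `S`: from `15(x, y)` one may increment `y`, or start the test that `y` is a
successor of `x`. -/
def sRules (c : Code) (n : ℕ) : List (Term × Term) :=
  (.app 15 [.var 0, .var 1], .app 14 [testT c n (.var 0) (.var 1), .var 1]) ::
  (.app 15 [.var 0, .var 1], .app 15 [.var 0, .app 1 [.var 1]]) :: evRules

/-- The system `R`: a successful test moves on from `x` to its successor `y`, and the search for a
successor of `y` starts at the numeral zero. -/
def rRules : List (Term × Term) :=
  [(.app 14 [.app 3 [.app 0 [], .app 2 []], .var 0], .app 15 [.var 0, .app 0 []])]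

theorem subst_numT (σ : ℕ → Term) (n : ℕ) : (numT n).subst σ = numT n := by
  induction n with
  | zero => simp [numT, Term.subst_app]
  | succ n ih => simp [numT, Term.subst_app, ih]

theorem subst_codeT (σ : ℕ → Term) (c : Code) : (codeT c).subst σ = codeT c := by
  induction c <;> simp_all [codeT, Term.subst_app]

theorem wfTerm_numT (n : ℕ) : WFTerm theSig (numT n) := by
  induction n with
  | zero => simp [numT, wfTerm_app, theSig]
  | succ n ih => simpa [numT, wfTerm_app, theSig] using ih

theorem wfTerm_codeT (c : Code) : WFTerm theSig (codeT c) := by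
  induction c <;> simp_all [codeT, wfTerm_app, theSig]

theorem not_isVarOf_numT (n m : ℕ) : ¬ IsVarOf m (numT n) := by
  induction n with
  | zero => simp [numT, isVarOf_app]
  | succ n ih => simpa [numT, isVarOf_app] using ih

theorem not_isVarOf_codeT (c : Code) (m : ℕ) : ¬ IsVarOf m (codeT c) := by
  induction c <;> simp_all [codeT, isVarOf_app]

theorem wfTRS_rRules : WFTRS theSig rRules := by
  refine ⟨by unfold WFSig theSig; decide, ?_⟩
  simp [rRules, wfTerm_app, isVarOf_app, isVarOf_var, theSig, WFTerm.var]

theorem wfTRS_sRules (c : Code) (n : ℕ) : WFTRS theSig (sRules c n) := by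
  refine ⟨by unfold WFSig theSig; decide, ?_⟩
  have h1 := wfTerm_numT n
  have h2 := wfTerm_codeT c
  simp only [theSig] at h1 h2
  simp [sRules, evRules, testT, wfTerm_app, isVarOf_app, isVarOf_var, theSig, WFTerm.var, h1, h2,
    not_isVarOf_numT, not_isVarOf_codeT]
  grind

/-! ### The evaluation rules are complete -/

/-- The substitution with prescribed values at the variables `0`, `1`, `2` and `3`. -/
def sub4 (a b c d : Term) : ℕ → Term
  | 0 => a
  | 1 => b
  | 2 => c
  | _ => d

/-- The `i`-th evaluation rule as a rewrite step. -/
theorem ev_step {S : List (Term × Term)} (hS : evRules ⊆ S) (i : ℕ) (hi : i < evRules.length)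
    (a b c d : Term) {s t : Term} (hs : (evRules[i]).1.subst (sub4 a b c d) = s)
    (ht : (evRules[i]).2.subst (sub4 a b c d) = t) : Reduces S s t := by
  subst hs ht
  exact .single (.rule _ _ _ (hS (List.getElem_mem hi)))

theorem Reduces.app₂ {S : List (Term × Term)} (f : ℕ) {a b a' b' : Term} (h1 : Reduces S a a')
    (h2 : Reduces S b b') : Reduces S (.app f [a, b]) (.app f [a', b']) :=
  Reduces.app f (.cons h1 (.cons h2 .nil))

theorem reduces_evT {S : List (Term × Term)} (hS : evRules ⊆ S) (c : Code) :
    ∀ l v : List ℕ, v ∈ c.eval l → Reduces S (evT (codeT c) (listT l)) (listT v) := by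
  have z : Term := .var 0
  induction c with
  | zero' =>
    intro l v h
    rw [Code.zero'_eval] at h
    obtain rfl := Part.mem_some_iff.1 h
    refine ev_step hS 0 (by decide) (listT l) z z z ?_ ?_ <;>
      simp [evRules, Term.subst_app, Term.subst_var, sub4, codeT, listT, numT]
  | succ =>
    intro l v h
    rw [Code.succ_eval] at h
    obtain rfl := Part.mem_some_iff.1 h
    cases l with
    | nil =>
      refine ev_step hS 1 (by decide) z z z z ?_ ?_ <;>
        simp [evRules, Term.subst_app, codeT, listT, numT]
    | cons x l =>
      refine ev_step hS 2 (by decide) (numT x) (listT l) z z ?_ ?_ <;>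
        simp [evRules, Term.subst_app, Term.subst_var, sub4, codeT, listT, numT]
  | tail =>
    intro l v h
    rw [Code.tail_eval] at h
    obtain rfl := Part.mem_some_iff.1 h
    cases l with
    | nil =>
      refine ev_step hS 3 (by decide) z z z z ?_ ?_ <;>
        simp [evRules, Term.subst_app, codeT, listT]
    | cons x l =>
      refine ev_step hS 4 (by decide) (numT x) (listT l) z z ?_ ?_ <;>
        simp [evRules, Term.subst_app, Term.subst_var, sub4, codeT, listT]
  | cons f g ihf ihg =>
    intro l v h
    rw [Code.cons_eval] at h
    obtain ⟨a, ha, h⟩ := Part.mem_bind_iff.1 h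
    obtain ⟨b, hb, h⟩ := Part.mem_bind_iff.1 h
    obtain rfl := Part.mem_some_iff.1 h
    have h1 : Reduces S (evT (codeT (.cons f g)) (listT l))
        (.app 12 [evT (codeT f) (listT l), evT (codeT g) (listT l)]) := by
      refine ev_step hS 5 (by decide) (codeT f) (codeT g) (listT l) z ?_ ?_ <;>
        simp [evRules, Term.subst_app, Term.subst_var, sub4, codeT]
    refine (h1.trans (Reduces.app₂ 12 (ihf _ _ ha) (ihg _ _ hb))).trans ?_
    cases a with
    | nil =>
      refine ev_step hS 6 (by decide) (listT b) z z z ?_ ?_ <;>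
        simp [evRules, Term.subst_app, Term.subst_var, sub4, listT, numT]
    | cons x a =>
      refine ev_step hS 7 (by decide) (numT x) (listT a) (listT b) z ?_ ?_ <;>
        simp [evRules, Term.subst_app, Term.subst_var, sub4, listT]
  | comp f g ihf ihg =>
    intro l v h
    rw [Code.comp_eval] at h
    obtain ⟨a, ha, h⟩ := Part.mem_bind_iff.1 h
    have h1 : Reduces S (evT (codeT (.comp f g)) (listT l))
        (evT (codeT f) (evT (codeT g) (listT l))) := by
      refine ev_step hS 8 (by decide) (codeT f) (codeT g) (listT l) z ?_ ?_ <;>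
        simp [evRules, Term.subst_app, Term.subst_var, sub4, codeT]
    exact (h1.trans (Reduces.app₂ 11 .refl (ihg _ _ ha))).trans (ihf _ _ h)
  | case f g ihf ihg =>
    intro l v h
    rw [Code.case_eval] at h
    rcases l with _ | ⟨_ | x, l⟩
    · refine Relation.ReflTransGen.trans ?_ (ihf [] v h)
      refine ev_step hS 9 (by decide) (codeT f) (codeT g) z z ?_ ?_ <;>
        simp [evRules, Term.subst_app, Term.subst_var, sub4, codeT, listT]
    · refine Relation.ReflTransGen.trans ?_ (ihf l v h)
      refine ev_step hS 10 (by decide) (codeT f) (codeT g) (listT l) z ?_ ?_ <;>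
        simp [evRules, Term.subst_app, Term.subst_var, sub4, codeT, listT, numT]
    · refine Relation.ReflTransGen.trans ?_ (ihg (x :: l) v h)
      refine ev_step hS 11 (by decide) (codeT f) (codeT g) (numT x) (listT l) ?_ ?_ <;>
        simp [evRules, Term.subst_app, Term.subst_var, sub4, codeT, listT, numT]
  | fix f ihf =>
    intro l v h
    rw [Code.fix_eval] at h
    refine PFun.fixInduction' (C := fun l => Reduces S (evT (codeT (.fix f)) (listT l)) (listT v))
      h ?_ ?_
    all_goals
      intro l
      have h1 : Reduces S (evT (codeT (.fix f)) (listT l))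
          (.app 13 [codeT f, evT (codeT f) (listT l)]) := by
        refine ev_step hS 12 (by decide) (codeT f) (listT l) z z ?_ ?_ <;>
          simp [evRules, Term.subst_app, Term.subst_var, sub4, codeT]
    · intro hl
      obtain ⟨a, ha, hav⟩ := (Part.mem_map_iff _).1 hl
      refine (h1.trans (Reduces.app₂ 13 .refl (ihf _ _ ha))).trans ?_
      rcases a with _ | ⟨_ | x, a⟩
      · obtain rfl : [] = v := by simpa using hav
        refine ev_step hS 13 (by decide) (codeT f) z z z ?_ ?_ <;>
          simp [evRules, Term.subst_app, Term.subst_var, sub4, listT]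
      · obtain rfl : a = v := by simpa using hav
        refine ev_step hS 14 (by decide) (codeT f) (listT a) z z ?_ ?_ <;>
          simp [evRules, Term.subst_app, Term.subst_var, sub4, listT, numT]
      · simp at hav
    · intro l' _ hl ih
      obtain ⟨a, ha, hav⟩ := (Part.mem_map_iff _).1 hl
      refine (h1.trans (Reduces.app₂ 13 .refl (ihf _ _ ha))).trans ?_
      rcases a with _ | ⟨_ | x, a⟩
      · simp at hav
      · simp at hav
      · obtain rfl : a = l' := by simpa using hav
        refine Relation.ReflTransGen.trans ?_ ih
        refine ev_step hS 15 (by decide) (codeT f) (numT x) (listT a) z ?_ ?_ <;>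
          simp [evRules, Term.subst_app, Term.subst_var, sub4, codeT, listT, numT]

/-! ### The evaluation rules are sound -/

/-- The values denoted by terms: numbers, lists of numbers, and codes. -/
inductive Val : Type
  | nat : ℕ → Val
  | list : List ℕ → Val
  | code : Code → Val

open Classical in
/-- The result of running `c` on `l`, if the computation converges. -/
noncomputable def evalO (c : Code) (l : List ℕ) : Option Val :=
  (c.eval l).toOption.map Val.list

/-- The partial operations interpreting the function symbols. The root symbols `14` and `15` have
no defined values, so that a term with a value contains neither of them. -/
noncomputable def interp : ℕ → List Val → Option Val
  | 0, [] => some (.nat 0)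
  | 1, [.nat n] => some (.nat (n + 1))
  | 2, [] => some (.list [])
  | 3, [.nat n, .list l] => some (.list (n :: l))
  | 4, [] => some (.code .zero')
  | 5, [] => some (.code .succ)
  | 6, [] => some (.code .tail)
  | 7, [.code f, .code g] => some (.code (.cons f g))
  | 8, [.code f, .code g] => some (.code (.comp f g))
  | 9, [.code f, .code g] => some (.code (.case f g))
  | 10, [.code f] => some (.code (.fix f))
  | 11, [.code c, .list l] => evalO c l
  | 12, [.list a, .list b] => some (.list (a.headI :: b))
  | 13, [.code f, .list v] => if v.headI = 0 then some (.list v.tail) else evalO (.fix f) v.tail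
  | _, _ => none

/-- The list of all values, provided that every entry is defined. -/
def seq : List (Option Val) → Option (List Val)
  | [] => some []
  | o :: os => o.bind fun v => (seq os).map (v :: ·)

/-- The value of a term in the partial algebra `interp`. Operations are strict: a term has a value
only if all its subterms do. -/
noncomputable def denote : Term → Option Val
  | .var _ => none
  | .app f ts => (seq (ts.attach.map fun x => denote x.1)).bind (interp f)
decreasing_by
  have := List.sizeOf_lt_of_mem x.2
  simp only [Term.app.sizeOf_spec]; omega

theorem denote_app (f : ℕ) (ts : List Term) :
    denote (.app f ts) = (seq (ts.map denote)).bind (interp f) := by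
  rw [denote]; simp

theorem evalO_eq_some {c : Code} {l : List ℕ} {v : Val} :
    evalO c l = some v ↔ ∃ r ∈ c.eval l, Val.list r = v := by
  classical
  simp [evalO, Option.map_eq_some_iff]

theorem denote_numT (n : ℕ) : denote (numT n) = some (.nat n) := by
  induction n with
  | zero => simp [numT, denote_app, seq, interp]
  | succ n ih => simp [numT, denote_app, seq, interp, ih]

theorem denote_codeT (c : Code) : denote (codeT c) = some (.code c) := by
  induction c <;> simp_all [codeT, denote_app, seq, interp]

theorem interp_14 (l : List Val) : interp 14 l = none := by simp [interp]

theorem interp_15 (l : List Val) : interp 15 l = none := by simp [interp]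

theorem seq_congr {a b : List (Option Val)} {o o' : Option Val}
    (h : ∀ v, o = some v → o' = some v) {l : List Val} (hs : seq (a ++ o :: b) = some l) :
    seq (a ++ o' :: b) = some l := by
  induction a generalizing l with
  | nil =>
    obtain ⟨v, hv, h2⟩ := Option.bind_eq_some_iff.1 hs
    exact Option.bind_eq_some_iff.2 ⟨v, h v hv, h2⟩
  | cons x a ih =>
    obtain ⟨v, hv, h2⟩ := Option.bind_eq_some_iff.1 hs
    obtain ⟨l', hl', h2⟩ := Option.map_eq_some_iff.1 h2
    exact Option.bind_eq_some_iff.2 ⟨v, hv, Option.map_eq_some_iff.2 ⟨l', ih hl', h2⟩⟩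

theorem evalO_some (c : Code) (l r : List ℕ) (h : c.eval l = Part.some r) :
    evalO c l = some (.list r) :=
  evalO_eq_some.2 ⟨r, by simp [h], rfl⟩

theorem evalO_cons {f g : Code} {l : List ℕ} {v : Val} (h : evalO (.cons f g) l = some v) :
    ∃ a b, evalO f l = some (.list a) ∧ evalO g l = some (.list b) ∧
      v = .list (a.headI :: b) := by
  obtain ⟨r, hr, rfl⟩ := evalO_eq_some.1 h
  rw [Code.cons_eval] at hr
  obtain ⟨a, ha, h⟩ := Part.mem_bind_iff.1 hr
  obtain ⟨b, hb, h⟩ := Part.mem_bind_iff.1 h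
  obtain rfl := Part.mem_some_iff.1 h
  exact ⟨a, b, evalO_eq_some.2 ⟨_, ha, rfl⟩, evalO_eq_some.2 ⟨_, hb, rfl⟩, rfl⟩

theorem evalO_comp {f g : Code} {l : List ℕ} {v : Val} (h : evalO (.comp f g) l = some v) :
    ∃ a, evalO g l = some (.list a) ∧ evalO f a = some v := by
  obtain ⟨r, hr, rfl⟩ := evalO_eq_some.1 h
  rw [Code.comp_eval] at hr
  obtain ⟨a, ha, h⟩ := Part.mem_bind_iff.1 hr
  exact ⟨a, evalO_eq_some.2 ⟨_, ha, rfl⟩, evalO_eq_some.2 ⟨_, h, rfl⟩⟩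

theorem evalO_case_zero (f g : Code) (l : List ℕ) (h : l.headI = 0) :
    evalO (.case f g) l = evalO f l.tail := by
  have : (Code.case f g).eval l = f.eval l.tail := by
    rw [Code.case_eval]
    beta_reduce
    rw [h]
    rfl
  rw [evalO, evalO, this]

theorem evalO_case_succ (f g : Code) (l : List ℕ) (y : ℕ) (h : l.headI = y + 1) :
    evalO (.case f g) l = evalO g (y :: l.tail) := by
  have : (Code.case f g).eval l = g.eval (y :: l.tail) := by
    rw [Code.case_eval]
    beta_reduce
    rw [h]
  rw [evalO, evalO, this]

theorem evalO_zero' (l : List ℕ) : evalO .zero' l = some (.list (0 :: l)) :=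
  evalO_eq_some.2 ⟨_, by simp, rfl⟩

theorem evalO_succ (l : List ℕ) : evalO .succ l = some (.list [l.headI.succ]) :=
  evalO_eq_some.2 ⟨_, by simp, rfl⟩

theorem evalO_tail (l : List ℕ) : evalO .tail l = some (.list l.tail) :=
  evalO_eq_some.2 ⟨_, by simp, rfl⟩

theorem evalO_fix {f : Code} {l : List ℕ} {v : Val} (h : evalO (.fix f) l = some v) :
    ∃ a, evalO f l = some (.list a) ∧
      (if a.headI = 0 then some (.list a.tail) else evalO (.fix f) a.tail) = some v := by
  obtain ⟨r, hr, rfl⟩ := evalO_eq_some.1 h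
  rw [Code.fix_eval] at hr
  rcases PFun.mem_fix_iff.1 hr with hr | ⟨l', hl, hr⟩
  · obtain ⟨a, ha, hav⟩ := (Part.mem_map_iff _).1 hr
    refine ⟨a, evalO_eq_some.2 ⟨_, ha, rfl⟩, ?_⟩
    split_ifs at hav ⊢
    all_goals simp_all
  · obtain ⟨a, ha, hav⟩ := (Part.mem_map_iff _).1 hl
    refine ⟨a, evalO_eq_some.2 ⟨_, ha, rfl⟩, ?_⟩
    by_cases h0 : a.headI = 0
    · simp [h0] at hav
    · obtain rfl : a.tail = l' := by simpa [h0] using hav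
      rw [if_neg h0]
      exact evalO_eq_some.2 ⟨r, by rwa [Code.fix_eval], rfl⟩

theorem denote_app₀ {f : ℕ} {v : Val} : denote (.app f []) = some v ↔ interp f [] = some v := by
  rw [denote_app]; rfl

theorem denote_app₁ {f : ℕ} {a : Term} {v : Val} : denote (.app f [a]) = some v ↔
    ∃ x, denote a = some x ∧ interp f [x] = some v := by
  simp [denote_app, seq, Option.bind_eq_some_iff]

theorem denote_app₂ {f : ℕ} {a b : Term} {v : Val} : denote (.app f [a, b]) = some v ↔
    ∃ x y, denote a = some x ∧ denote b = some y ∧ interp f [x, y] = some v := by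
  simp [denote_app, seq, Option.bind_eq_some_iff]

theorem denote_nil {v : Val} : denote (.app 2 []) = some v ↔ v = .list [] := by
  rw [denote_app₀]; simp [interp, eq_comm]

theorem denote_zero {v : Val} : denote (.app 0 []) = some v ↔ v = .nat 0 := by
  rw [denote_app₀]; simp [interp, eq_comm]

theorem denote_succ {a : Term} {v : Val} : denote (.app 1 [a]) = some v ↔
    ∃ n, denote a = some (.nat n) ∧ v = .nat (n + 1) := by
  rw [denote_app₁]
  constructor
  · rintro ⟨_ | _ | _, h1, h2⟩ <;> simp_all [interp]
  · rintro ⟨n, h1, rfl⟩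
    exact ⟨_, h1, by simp [interp]⟩

theorem denote_cons {a b : Term} {v : Val} : denote (.app 3 [a, b]) = some v ↔
    ∃ n l, denote a = some (.nat n) ∧ denote b = some (.list l) ∧ v = .list (n :: l) := by
  rw [denote_app₂]
  constructor
  · rintro ⟨_ | _ | _, _ | _ | _, h1, h2, h3⟩ <;> simp_all [interp]
  · rintro ⟨n, l, h1, h2, rfl⟩
    exact ⟨_, _, h1, h2, by simp [interp]⟩

theorem denote_evT {a b : Term} {v : Val} : denote (evT a b) = some v ↔
    ∃ c l, denote a = some (.code c) ∧ denote b = some (.list l) ∧ evalO c l = some v := by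
  rw [evT, denote_app₂]
  constructor
  · rintro ⟨_ | _ | _, _ | _ | _, h1, h2, h3⟩ <;> simp_all [interp]
  · rintro ⟨n, l, h1, h2, h3⟩
    exact ⟨_, _, h1, h2, by simpa [interp] using h3⟩

theorem denote_mk {a b : Term} {v : Val} : denote (.app 12 [a, b]) = some v ↔
    ∃ k l, denote a = some (.list k) ∧ denote b = some (.list l) ∧ v = .list (k.headI :: l) := by
  rw [denote_app₂]
  constructor
  · rintro ⟨_ | _ | _, _ | _ | _, h1, h2, h3⟩ <;> simp_all [interp]
  · rintro ⟨n, l, h1, h2, rfl⟩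
    exact ⟨_, _, h1, h2, by simp [interp]⟩

theorem denote_lp {a b : Term} {v : Val} : denote (.app 13 [a, b]) = some v ↔
    ∃ f l, denote a = some (.code f) ∧ denote b = some (.list l) ∧
      (if l.headI = 0 then some (.list l.tail) else evalO (.fix f) l.tail) = some v := by
  rw [denote_app₂]
  constructor
  · rintro ⟨_ | _ | _, _ | _ | _, h1, h2, h3⟩ <;> simp_all [interp]
  · rintro ⟨n, l, h1, h2, h3⟩
    exact ⟨_, _, h1, h2, by simpa [interp] using h3⟩

/-- The binary symbols `7`, `8` and `9` build codes. -/
theorem denote_code₂ {i : ℕ} {K : Code → Code → Code}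
    (hK : (i, K) ∈ [(7, Code.cons), (8, Code.comp), (9, Code.case)]) {a b : Term} {v : Val} :
    denote (.app i [a, b]) = some v ↔
      ∃ f g, denote a = some (.code f) ∧ denote b = some (.code g) ∧ v = .code (K f g) := by
  rw [denote_app₂]
  simp only [List.mem_cons, Prod.mk.injEq, List.not_mem_nil, or_false] at hK
  constructor
  · rcases hK with ⟨rfl, rfl⟩ | ⟨rfl, rfl⟩ | ⟨rfl, rfl⟩ <;>
      rintro ⟨_ | _ | _, _ | _ | _, h1, h2, h3⟩ <;> simp_all [interp]
  · rintro ⟨n, l, h1, h2, rfl⟩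
    exact ⟨_, _, h1, h2, by
      rcases hK with ⟨rfl, rfl⟩ | ⟨rfl, rfl⟩ | ⟨rfl, rfl⟩ <;> simp [interp]⟩

theorem denote_fix {a : Term} {v : Val} : denote (.app 10 [a]) = some v ↔
    ∃ f, denote a = some (.code f) ∧ v = .code (.fix f) := by
  rw [denote_app₁]
  constructor
  · rintro ⟨_ | _ | _, h1, h2⟩ <;> simp_all [interp]
  · rintro ⟨n, h1, rfl⟩
    exact ⟨_, h1, by simp [interp]⟩

theorem denote_basic {i : ℕ} {k : Code}
    (hk : (i, k) ∈ [(4, Code.zero'), (5, Code.succ), (6, Code.tail)]) {v : Val} :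
    denote (.app i []) = some v ↔ v = .code k := by
  simp only [List.mem_cons, Prod.mk.injEq, List.not_mem_nil, or_false] at hk
  rcases hk with ⟨rfl, rfl⟩ | ⟨rfl, rfl⟩ | ⟨rfl, rfl⟩ <;> rw [denote_app₀] <;> simp [interp, eq_comm]

/-- Rewriting preserves values. -/
theorem denote_step {c : Code} {n : ℕ} {t u : Term} (h : Rewrite (sRules c n) t u) :
    ∀ v, denote t = some v → denote u = some v := by
  induction h with
  | congr f ts₁ ts₂ t t' _ ih =>
    intro v hv
    rw [denote_app, List.map_append, List.map_cons] at hv ⊢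
    obtain ⟨l, hl, h2⟩ := Option.bind_eq_some_iff.1 hv
    exact Option.bind_eq_some_iff.2 ⟨l, seq_congr ih hl, h2⟩
  | rule l r σ h =>
    intro v
    simp only [sRules, List.mem_cons, Prod.mk.injEq] at h
    rcases h with ⟨rfl, rfl⟩ | ⟨rfl, rfl⟩ | h
    · simp [Term.subst_app, denote_app, interp_15]
    · simp [Term.subst_app, denote_app, interp_15]
    simp only [evRules, List.mem_cons, Prod.mk.injEq, List.not_mem_nil, or_false] at h
    have h7 := @denote_code₂ 7 Code.cons (by simp)
    have h8 := @denote_code₂ 8 Code.comp (by simp)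
    have h9 := @denote_code₂ 9 Code.case (by simp)
    have h4 := @denote_basic 4 Code.zero' (by simp)
    have h5 := @denote_basic 5 Code.succ (by simp)
    have h6 := @denote_basic 6 Code.tail (by simp)
    rcases h with ⟨rfl, rfl⟩ | ⟨rfl, rfl⟩ | ⟨rfl, rfl⟩ | ⟨rfl, rfl⟩ | ⟨rfl, rfl⟩ | ⟨rfl, rfl⟩ |
      ⟨rfl, rfl⟩ | ⟨rfl, rfl⟩ | ⟨rfl, rfl⟩ | ⟨rfl, rfl⟩ | ⟨rfl, rfl⟩ | ⟨rfl, rfl⟩ |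
      ⟨rfl, rfl⟩ | ⟨rfl, rfl⟩ | ⟨rfl, rfl⟩ | ⟨rfl, rfl⟩ 
    all_goals
      simp only [Term.subst_app, Term.subst_var, List.map_cons, List.map_nil, denote_evT, denote_mk,
        denote_lp, denote_fix, denote_cons, denote_succ, denote_zero, denote_nil, h4, h5, h6, h7,
        h8, h9, Val.code.injEq, Val.nat.injEq, Val.list.injEq]
      clear h4 h5 h6 h7 h8 h9
    · rintro ⟨_, l, rfl, h, hv⟩
      rw [evalO_zero'] at hv
      grind
    · rintro ⟨_, _, rfl, rfl, hv⟩
      rw [evalO_succ] at hv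
      obtain rfl := Option.some.inj hv
      exact ⟨_, _, ⟨0, rfl, rfl⟩, rfl, rfl⟩
    · rintro ⟨_, _, rfl, ⟨a, l, h0, h1, rfl⟩, hv⟩
      rw [evalO_succ] at hv
      grind [List.headI]
    · rintro ⟨_, _, rfl, rfl, hv⟩
      rw [evalO_tail] at hv
      grind
    · rintro ⟨_, _, rfl, ⟨a, l, h0, h1, rfl⟩, hv⟩
      rw [evalO_tail] at hv
      grind
    · rintro ⟨_, l, ⟨f, g, h0, h1, rfl⟩, h2, hv⟩
      obtain ⟨a, b, ha, hb, rfl⟩ := evalO_cons hv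
      exact ⟨a, b, ⟨f, l, h0, h2, ha⟩, ⟨g, l, h1, h2, hb⟩, rfl⟩
    · rintro ⟨_, l, rfl, h, rfl⟩
      exact ⟨_, _, rfl, h, rfl⟩
    · rintro ⟨_, l, ⟨a, b, h0, h1, rfl⟩, h2, rfl⟩
      exact ⟨_, _, h0, h2, rfl⟩
    · rintro ⟨_, l, ⟨f, g, h0, h1, rfl⟩, h2, hv⟩
      obtain ⟨a, ha, hb⟩ := evalO_comp hv
      exact ⟨f, a, h0, ⟨g, l, h1, h2, ha⟩, hb⟩
    · rintro ⟨_, _, ⟨f, g, h0, h1, rfl⟩, rfl, hv⟩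
      rw [evalO_case_zero _ _ _ rfl] at hv
      exact ⟨f, _, h0, rfl, hv⟩
    · rintro ⟨_, _, ⟨f, g, h0, h1, rfl⟩, ⟨_, l, rfl, h2, rfl⟩, hv⟩
      rw [evalO_case_zero _ _ _ rfl] at hv
      exact ⟨f, _, h0, h2, hv⟩
    · rintro ⟨_, _, ⟨f, g, h0, h1, rfl⟩, ⟨_, l, ⟨x, h2, rfl⟩, h3, rfl⟩, hv⟩
      rw [evalO_case_succ _ _ _ _ rfl] at hv
      exact ⟨g, _, h1, ⟨x, l, h2, h3, rfl⟩, hv⟩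
    · rintro ⟨_, l, ⟨f, h0, rfl⟩, h1, hv⟩
      obtain ⟨a, ha, hb⟩ := evalO_fix hv
      exact ⟨f, a, h0, ⟨f, l, h0, h1, ha⟩, hb⟩
    · rintro ⟨f, _, h0, rfl, hv⟩
      simpa [eq_comm] using hv
    · rintro ⟨f, _, h0, ⟨_, l, rfl, h1, rfl⟩, hv⟩
      simpa [h1] using hv
    · rintro ⟨f, _, h0, ⟨_, l, ⟨x, h1, rfl⟩, h2, rfl⟩, hv⟩
      exact ⟨_, l, ⟨f, h0, rfl⟩, h2, by simpa using hv⟩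

/-! ### Infinite sequences of root steps -/


theorem app₂_eq_append {f g : ℕ} {a b t : Term} {ts₁ ts₂ : List Term}
    (h : Term.app f [a, b] = .app g (ts₁ ++ t :: ts₂)) :
    g = f ∧ ((ts₁ = [] ∧ t = a ∧ ts₂ = [b]) ∨ (ts₁ = [a] ∧ t = b ∧ ts₂ = [])) := by
  simp only [Term.app.injEq] at h
  obtain ⟨rfl, h⟩ := h
  refine ⟨rfl, ?_⟩
  rcases ts₁ with _ | ⟨x, _ | ⟨y, ts₁⟩⟩ <;> simp_all

theorem rewrite_run {c : Code} {n : ℕ} {a b u : Term}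
    (h : Rewrite (sRules c n) (.app 14 [a, b]) u) :
    (∃ a', Rewrite (sRules c n) a a' ∧ u = .app 14 [a', b]) ∨
      ∃ b', Rewrite (sRules c n) b b' ∧ u = .app 14 [a, b'] := by
  generalize hs : Term.app 14 [a, b] = s at h
  cases h with
  | rule l r σ h =>
    simp only [sRules, evRules, List.mem_cons, Prod.mk.injEq, List.not_mem_nil, or_false] at h
    rcases h with ⟨rfl, rfl⟩ | ⟨rfl, rfl⟩ | ⟨rfl, rfl⟩ | ⟨rfl, rfl⟩ | ⟨rfl, rfl⟩ | ⟨rfl, rfl⟩ |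
      ⟨rfl, rfl⟩ | ⟨rfl, rfl⟩ | ⟨rfl, rfl⟩ | ⟨rfl, rfl⟩ | ⟨rfl, rfl⟩ | ⟨rfl, rfl⟩ | ⟨rfl, rfl⟩ |
      ⟨rfl, rfl⟩ | ⟨rfl, rfl⟩ | ⟨rfl, rfl⟩ | ⟨rfl, rfl⟩ | ⟨rfl, rfl⟩ <;>
      simp [Term.subst_app] at hs
  | congr f ts₁ ts₂ t t' h =>
    obtain ⟨rfl, ⟨rfl, rfl, rfl⟩ | ⟨rfl, rfl, rfl⟩⟩ := app₂_eq_append hs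
    · exact .inl ⟨t', h, rfl⟩
    · exact .inr ⟨t', h, rfl⟩

theorem rewrite_pick {c : Code} {n : ℕ} {a b u : Term}
    (h : Rewrite (sRules c n) (.app 15 [a, b]) u) :
    u = .app 14 [testT c n a b, b] ∨ u = .app 15 [a, .app 1 [b]] ∨
      (∃ a', Rewrite (sRules c n) a a' ∧ u = .app 15 [a', b]) ∨
      ∃ b', Rewrite (sRules c n) b b' ∧ u = .app 15 [a, b'] := by
  generalize hs : Term.app 15 [a, b] = s at h
  cases h with
  | rule l r σ h =>
    simp only [sRules, evRules, List.mem_cons, Prod.mk.injEq, List.not_mem_nil, or_false] at h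
    rcases h with ⟨rfl, rfl⟩ | ⟨rfl, rfl⟩ | ⟨rfl, rfl⟩ | ⟨rfl, rfl⟩ | ⟨rfl, rfl⟩ | ⟨rfl, rfl⟩ |
      ⟨rfl, rfl⟩ | ⟨rfl, rfl⟩ | ⟨rfl, rfl⟩ | ⟨rfl, rfl⟩ | ⟨rfl, rfl⟩ | ⟨rfl, rfl⟩ | ⟨rfl, rfl⟩ |
      ⟨rfl, rfl⟩ | ⟨rfl, rfl⟩ | ⟨rfl, rfl⟩ | ⟨rfl, rfl⟩ | ⟨rfl, rfl⟩ <;>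
      simp [Term.subst_app, Term.subst_var] at hs
    all_goals
      obtain ⟨rfl, rfl⟩ := hs
      simp [Term.subst_app, Term.subst_var, testT, subst_codeT, subst_numT]
  | congr f ts₁ ts₂ t t' h =>
    obtain ⟨rfl, ⟨rfl, rfl, rfl⟩ | ⟨rfl, rfl, rfl⟩⟩ := app₂_eq_append hs
    · exact .inr (.inr (.inl ⟨t', h, rfl⟩))
    · exact .inr (.inr (.inr ⟨t', h, rfl⟩))

theorem denote_testT {c : Code} {n a m : ℕ} {x y : Term} (hx : denote x = some (.nat a))
    (hy : denote y = some (.nat m)) : denote (testT c n x y) = evalO c [n, a, m] := by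
  have h2 : denote (.app 2 []) = some (.list []) := denote_nil.2 rfl
  have h3 := denote_cons.2 ⟨_, _, hy, h2, rfl⟩
  have h4 := denote_cons.2 ⟨_, _, hx, h3, rfl⟩
  have h5 := denote_cons.2 ⟨_, _, denote_numT n, h4, rfl⟩
  ext v
  rw [testT, denote_evT]
  simp [denote_codeT, h5]

/-- The invariant of the terms reachable from `15(x, 0)` by `S`-steps: the second argument denotes a
number `m`, and if `x` denotes a number `a`, then the first argument of a term headed by `14`
denotes the result of the test of `m` against `a`. -/
def Reachable (c : Code) (n : ℕ) (x s : Term) : Prop :=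
  ∃ (i : ℕ) (p q : Term) (m : ℕ), s = .app i [p, q] ∧ denote q = some (.nat m) ∧
    (i = 15 ∧ (∀ a, denote x = some (.nat a) → denote p = some (.nat a)) ∨
      i = 14 ∧ ∀ a, denote x = some (.nat a) → denote p = evalO c [n, a, m])

theorem Reachable.step {c : Code} {n : ℕ} {x s t : Term}
    (hc : ∀ a m, ∃ v, evalO c [n, a, m] = some v) (h : Reachable c n x s)
    (hst : Rewrite (sRules c n) s t) : Reachable c n x t := by
  obtain ⟨i, p, q, m, rfl, hq, ⟨rfl, hp⟩ | ⟨rfl, hp⟩⟩ := h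
  · rcases rewrite_pick hst with rfl | rfl | ⟨p', hpp, rfl⟩ | ⟨q', hqq, rfl⟩
    · exact ⟨14, _, _, m, rfl, hq, .inr ⟨rfl, fun a ha => denote_testT (hp a ha) hq⟩⟩
    · exact ⟨15, _, _, m + 1, rfl, denote_succ.2 ⟨_, hq, rfl⟩, .inl ⟨rfl, hp⟩⟩
    · exact ⟨15, _, _, m, rfl, hq, .inl ⟨rfl, fun a ha => denote_step hpp _ (hp a ha)⟩⟩
    · exact ⟨15, _, _, m, rfl, denote_step hqq _ hq, .inl ⟨rfl, hp⟩⟩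
  · rcases rewrite_run hst with ⟨p', hpp, rfl⟩ | ⟨q', hqq, rfl⟩
    · refine ⟨14, _, _, m, rfl, hq, .inr ⟨rfl, fun a ha => ?_⟩⟩
      obtain ⟨v, hv⟩ := hc a m
      rw [hv]
      exact denote_step hpp _ ((hp a ha).trans hv)
    · exact ⟨14, _, _, m, rfl, denote_step hqq _ hq, .inr ⟨rfl, hp⟩⟩

/-- An `S`-reduction between two consecutive root steps finds a successor. -/
theorem exists_successor {c : Code} {n : ℕ} {x y : Term}
    (hc : ∀ a m, ∃ v, evalO c [n, a, m] = some v)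
    (h : Reduces (sRules c n) (.app 15 [x, .app 0 []])
      (.app 14 [.app 3 [.app 0 [], .app 2 []], y])) :
    ∃ m, denote y = some (.nat m) ∧
      ∀ a, denote x = some (.nat a) → evalO c [n, a, m] = some (.list [0]) := by
  have key : ∀ t, Reduces (sRules c n) (.app 15 [x, .app 0 []]) t → Reachable c n x t := by
    intro t ht
    induction ht with
    | refl => exact ⟨15, _, _, 0, rfl, denote_zero.2 rfl, .inl ⟨rfl, fun _ => id⟩⟩
    | tail _ h ih => exact ih.step hc h
  obtain ⟨i, p, q, m, h1, hq, h2⟩ := key _ h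
  simp only [Term.app.injEq, List.cons.injEq, and_true] at h1
  obtain ⟨rfl, rfl, rfl⟩ := h1
  refine ⟨m, hq, fun a ha => ?_⟩
  rcases h2 with ⟨h2, -⟩ | ⟨-, h2⟩
  · omega
  · rw [← h2 a ha]
    exact denote_cons.2 ⟨0, [], denote_zero.2 rfl, denote_nil.2 rfl, rfl⟩

theorem rootStep_rRules {s t : Term} : RootStep rRules s t ↔
    ∃ x, s = .app 14 [.app 3 [.app 0 [], .app 2 []], x] ∧ t = .app 15 [x, .app 0 []] := by
  constructor
  · rintro ⟨l, r, σ, h, rfl, rfl⟩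
    simp only [rRules, List.mem_singleton, Prod.mk.injEq] at h
    obtain ⟨rfl, rfl⟩ := h
    exact ⟨σ 0, by simp [Term.subst_app, Term.subst_var]⟩
  · rintro ⟨x, rfl, rfl⟩
    exact ⟨_, _, fun _ => x, List.mem_singleton.2 rfl, by simp [Term.subst_app, Term.subst_var]⟩

theorem reduces_increment (c : Code) (n : ℕ) (x : Term) (m : ℕ) :
    Reduces (sRules c n) (.app 15 [x, .app 0 []]) (.app 15 [x, numT m]) := by
  induction m with
  | zero => exact .refl
  | succ m ih =>
    refine ih.tail ?_
    have := Rewrite.rule (R := sRules c n) (.app 15 [.var 0, .var 1])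
      (.app 15 [.var 0, .app 1 [.var 1]]) (sub4 x (numT m) x x) (by simp [sRules])
    simpa [Term.subst_app, Term.subst_var, sub4, numT] using this

theorem reduces_found {c : Code} {n a m : ℕ} (h : [0] ∈ c.eval [n, a, m]) :
    Reduces (sRules c n) (.app 15 [numT a, .app 0 []])
      (.app 14 [.app 3 [.app 0 [], .app 2 []], numT m]) := by
  refine (reduces_increment c n _ m).trans (.trans (.single ?_)
    (Reduces.app₂ 14 (reduces_evT (S := sRules c n) (fun x hx => by simp [sRules, hx]) c _ _ h)
      .refl))
  have := Rewrite.rule (R := sRules c n) (.app 15 [.var 0, .var 1])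
    (.app 14 [testT c n (.var 0) (.var 1), .var 1])
    (sub4 (numT a) (numT m) (numT m) (numT m)) (by simp [sRules])
  simpa [Term.subst_app, Term.subst_var, sub4, testT, subst_codeT, subst_numT, listT] using this

/-- Infinitely many root steps correspond to an infinite chain of successors. -/
theorem sntop_rules_iff {c : Code} {n : ℕ} {F : ℕ → ℕ → Bool}
    (hc : ∀ a m, c.eval [n, a, m] = pure [if F a m then 0 else 1]) :
    SNtop rRules (sRules c n) ↔ ¬ ∃ a : ℕ → ℕ, ∀ k, F (a k) (a (k + 1)) = true := by
  have hv : ∀ a m, evalO c [n, a, m] = some (.list [if F a m then 0 else 1]) :=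
    fun a m => evalO_eq_some.2 ⟨_, by rw [hc]; exact Part.mem_some _, rfl⟩
  refine not_congr ⟨?_, ?_⟩
  · rintro ⟨f, hf⟩
    choose u hu hr using hf
    choose x hx hx' using fun k => rootStep_rRules.1 (hr k)
    have h1 : ∀ k, _ := fun k => exists_successor (fun a m => ⟨_, hv a m⟩)
      (c := c) (n := n) (x := x k) (y := x (k + 1)) (by rw [← hx', ← hx]; exact hu _)
    choose m hm hs using h1
    refine ⟨m, fun k => ?_⟩
    have := hs (k + 1) _ (hm k)
    rw [hv] at this
    by_contra h0
    simp [h0] at this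
  · rintro ⟨a, ha⟩
    refine ⟨fun k => .app 15 [numT (a k), .app 0 []], fun k =>
      ⟨_, reduces_found (m := a (k + 1)) ?_, rootStep_rRules.2 ⟨_, rfl, rfl⟩⟩⟩
    rw [hc, ha k]
    exact Part.mem_some _

/-! ### Hardness -/


/-- No prefix of `L` satisfies `p n`. -/
def avoids (p : ℕ → ℕ → Bool) (n : ℕ) (L : List ℕ) : Bool :=
  Nat.rec true (fun i b => b && !p n (Encodable.encode (L.take i))) (L.length + 1)

theorem avoids_iff {p : ℕ → ℕ → Bool} {n : ℕ} {L : List ℕ} :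
    avoids p n L = true ↔ ∀ i ≤ L.length, p n (Encodable.encode (L.take i)) = false := by
  have : ∀ k, Nat.rec (motive := fun _ => Bool) true
      (fun i b => b && !p n (Encodable.encode (L.take i))) k = true ↔
      ∀ i < k, p n (Encodable.encode (L.take i)) = false := by
    intro k
    induction k with
    | zero => simp
    | succ k ih =>
      simp only [Bool.and_eq_true, ih, Bool.not_eq_true', Nat.lt_succ_iff_lt_or_eq, or_imp,
        forall_and, forall_eq]
  exact (this _).trans (forall_congr' fun i => imp_congr_left Nat.lt_succ_iff)

/-- The relation whose infinite chains are the infinite sequences without prefix satisfying `p n`: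
the sequence coded by `m` extends the one coded by `y` by one entry, and no prefix of it satisfies
`p n`. -/
def extends₁ (p : ℕ → ℕ → Bool) (n y m : ℕ) : Bool :=
  let L := Denumerable.ofNat (List ℕ) m
  decide (L.length ≠ 0 ∧ y = Encodable.encode (L.take (L.length - 1))) && avoids p n L

theorem computable_avoids {p : ℕ → ℕ → Bool} (hp : Computable fun x : ℕ × ℕ => p x.1 x.2) :
    Computable₂ (avoids p) := by
  have h1 : Computable fun x : (ℕ × List ℕ) × ℕ × Bool =>
      p x.1.1 (Encodable.encode (x.1.2.take x.2.1)) :=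
    hp.comp (Primrec.pair (Primrec.fst.comp Primrec.fst) (Primrec.encode.comp
      (Primrec.list_take.comp (Primrec.fst.comp Primrec.snd)
        (Primrec.snd.comp Primrec.fst)))).to_comp
  have h2 : Computable₂ fun (x : ℕ × List ℕ) (y : ℕ × Bool) =>
      y.2 && !p x.1 (Encodable.encode (x.2.take y.1)) :=
    Primrec.and.to_comp.comp (Computable.snd.comp Computable.snd) (Primrec.not.to_comp.comp h1)
  have h3 : Computable fun x : ℕ × List ℕ => x.2.length + 1 :=
    (Primrec.succ.comp (Primrec.list_length.comp Primrec.snd)).to_comp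
  exact Computable.nat_rec h3 (Computable.const true) h2

theorem computable_extends₁ {p : ℕ → ℕ → Bool} (hp : Computable fun x : ℕ × ℕ => p x.1 x.2) :
    Computable fun x : ℕ × ℕ × ℕ => extends₁ p x.1 x.2.1 x.2.2 := by
  have hL : Primrec fun x : ℕ × ℕ × ℕ => Denumerable.ofNat (List ℕ) x.2.2 :=
    (Primrec.ofNat _).comp (Primrec.snd.comp Primrec.snd)
  have hlen := Primrec.list_length.comp hL
  have h1 : PrimrecPred fun x : ℕ × ℕ × ℕ =>
      (Denumerable.ofNat (List ℕ) x.2.2).length ≠ 0 ∧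
        x.2.1 = Encodable.encode ((Denumerable.ofNat (List ℕ) x.2.2).take
          ((Denumerable.ofNat (List ℕ) x.2.2).length - 1)) :=
    PrimrecPred.and (Primrec.eq.comp hlen (Primrec.const 0)).not
      (Primrec.eq.comp (Primrec.fst.comp Primrec.snd) (Primrec.encode.comp
        (Primrec.list_take.comp (Primrec.nat_sub.comp hlen (Primrec.const 1)) hL)))
  have h2 : Computable fun x : ℕ × ℕ × ℕ => avoids p x.1 (Denumerable.ofNat (List ℕ) x.2.2) :=
    (computable_avoids hp).comp Computable.fst hL.to_comp
  exact Primrec.and.to_comp.comp h1.decide.to_comp h2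

theorem exists_chain_iff {p : ℕ → ℕ → Bool} {n : ℕ} :
    (∃ a : ℕ → ℕ, ∀ k, extends₁ p n (a k) (a (k + 1)) = true) ↔
      ∃ α : ℕ → ℕ, ∀ k : ℕ,
        p n (Encodable.encode (List.ofFn (fun i : Fin k => α i))) = false := by
  have hr : ∀ (α : ℕ → ℕ) (k : ℕ), List.ofFn (fun i : Fin k => α i) = (List.range k).map α := by
    intro α k
    refine List.ext_getElem (by simp) fun i h1 h2 => by simp [-List.ofFn_succ]
  simp only [hr]
  constructor
  · rintro ⟨a, ha⟩
    let L : ℕ → List ℕ := fun k => Denumerable.ofNat (List ℕ) (a k)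
    have h1 : ∀ k, (L (k + 1)).length ≠ 0 := fun k => by
      have := ha k
      simp only [extends₁, Bool.and_eq_true, decide_eq_true_eq] at this
      exact this.1.1
    have h2 : ∀ k, L k = (L (k + 1)).take ((L (k + 1)).length - 1) := fun k => by
      have := ha k
      simp only [extends₁, Bool.and_eq_true, decide_eq_true_eq] at this
      show Denumerable.ofNat _ _ = _
      rw [this.1.2, Denumerable.ofNat_encode]
    have h3 : ∀ k, ∀ i ≤ (L (k + 1)).length, p n (Encodable.encode ((L (k + 1)).take i)) = false :=
      fun k => by
        have := ha k
        simp only [extends₁, Bool.and_eq_true] at this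
        exact avoids_iff.1 this.2
    have h4 : ∀ k, (L (k + 1)).length = (L k).length + 1 := fun k => by
      have := congrArg List.length (h2 k)
      rw [List.length_take] at this
      have := h1 k
      omega
    have h5 : ∀ k, k ≤ (L k).length := fun k => by
      induction k with
      | zero => exact Nat.zero_le _
      | succ k ih => rw [h4]; omega
    refine ⟨fun i => (L (i + 1)).getD i 0, fun k => ?_⟩
    have h6 : ∀ k, (L k).take k = (List.range k).map fun i => (L (i + 1)).getD i 0 := by
      intro k
      induction k with
      | zero => simp
      | succ k ih =>
        have hk := h5 (k + 1)
        have hk' := h5 k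
        rw [List.range_succ, List.map_append, ← ih, h2 k, List.take_take, List.take_add_one,
          min_eq_left (by rw [h4]; omega)]
        simp [List.getElem?_eq_getElem (show k < (L (k + 1)).length by omega)]
    have hk := h5 (k + 1)
    have := h3 k k (by omega)
    rw [h4] at hk
    rwa [← h6, h2 k, List.take_take, min_eq_left (by rw [h4]; omega)]
  · rintro ⟨α, hα⟩
    refine ⟨fun k => Encodable.encode ((List.range k).map α), fun k => ?_⟩
    simp only [extends₁, Denumerable.ofNat_encode, Bool.and_eq_true, decide_eq_true_eq]
    refine ⟨⟨by simp, by simp [← List.map_take, List.take_range]⟩, avoids_iff.2 fun i hi => ?_⟩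
    rw [← List.map_take, List.take_range]
    exact hα _

theorem exists_code₃ {F : ℕ → ℕ → ℕ → Bool}
    (hF : Computable fun x : ℕ × ℕ × ℕ => F x.1 x.2.1 x.2.2) :
    ∃ c : Code, ∀ n y m, c.eval [n, y, m] = pure [if F n y m then 0 else 1] := by
  have h : Computable fun v : List.Vector ℕ 3 =>
      (if F (v.get 0) (v.get 1) (v.get 2) then 0 else 1 : ℕ) := by
    have hget : ∀ i : Fin 3, Computable fun v : List.Vector ℕ 3 => v.get i := fun i =>
      Computable.vector_get.comp Computable.id (Computable.const i)
    have := hF.comp ((hget 0).pair ((hget 1).pair (hget 2)))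
    refine (Computable.cond this (Computable.const 0) (Computable.const 1)).of_eq fun v => ?_
    cases F (v.get 0) (v.get 1) (v.get 2) <;> rfl
  obtain ⟨c, hc⟩ := Code.exists_code (Nat.Partrec'.part_iff.2 h)
  refine ⟨c, fun n y m => ?_⟩
  exact (hc ⟨[n, y, m], rfl⟩).trans (Part.map_some _ _)

theorem primrec_numT : Primrec numT := by
  have : Primrec fun n : ℕ => Nat.rec (motive := fun _ => Term) (.app 0 [])
      (fun _ t => .app 1 [t]) n :=
    Primrec.nat_rec' Primrec.id (Primrec.const _) (primrec_app.comp₂ (Primrec₂.const 1)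
      (Primrec.list_cons.comp₂ (Primrec.snd.comp₂ Primrec₂.right) (Primrec₂.const [])))
  refine this.of_eq fun n => ?_
  induction n with
  | zero => rfl
  | succ n ih => rw [numT, ← ih]

theorem primrec_sRules (c : Code) : Primrec (sRules c) := by
  have hcons : ∀ {f : ℕ → Term} (t : List Term), Primrec f → Primrec fun n => f n :: t :=
    fun t hf => Primrec.list_cons.comp hf (Primrec.const t)
  have happ : ∀ {f : ℕ → List Term} (i : ℕ), Primrec f → Primrec fun n => Term.app i (f n) :=
    fun i hf => primrec_app.comp (Primrec.const i) hf
  refine Primrec.list_cons.comp (Primrec.pair (Primrec.const _) (happ _ (hcons _ (happ _ ?_))))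
    (Primrec.const _)
  exact Primrec.list_cons.comp (Primrec.const _) (hcons _ (happ _ (hcons _ primrec_numT)))

theorem hard_sntop (B : Set ℕ) (hB : Pi11 B) :
    ManyOneRed B { n : ℕ | ∃ (sig : List (ℕ × ℕ)) (R S : List (Term × Term)),
      WFTRS sig R ∧ WFTRS sig S ∧
        n = Nat.pair (encodeSig sig) (Nat.pair (encodeTRS R) (encodeTRS S)) ∧ SNtop R S } := by
  obtain ⟨p, hp, hBp⟩ := hB
  obtain ⟨c, hc⟩ := exists_code₃ (computable_extends₁ hp)
  refine ⟨fun n => Nat.pair (encodeSig theSig)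
    (Nat.pair (encodeTRS rRules) (encodeTRS (sRules c n))), ?_, fun n => ?_⟩
  · have : Primrec fun n => encodeTRS (sRules c n) :=
      (Primrec.encode.comp (primrec_sRules c)).of_eq fun n => encode_rules _
    exact (Primrec₂.natPair.comp (Primrec.const _)
      (Primrec₂.natPair.comp (Primrec.const _) this)).to_comp
  · have h1 : n ∈ B ↔ SNtop rRules (sRules c n) := by
      rw [sntop_rules_iff (hc n), exists_chain_iff, hBp]
      simp
    rw [h1]
    constructor
    · exact fun h => ⟨_, _, _, wfTRS_rRules, wfTRS_sRules c n, rfl, h⟩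
    · rintro ⟨sig, R, S, -, -, h2, h3⟩
      have h4 := congrArg problem h2
      rw [problem_encode, problem_encode] at h4
      simp only [Prod.mk.injEq] at h4
      obtain ⟨-, rfl, rfl⟩ := h4
      exact h3

/-- Finiteness of dependency pair problems: the set of (codes of) pairs
`(R, S)` of finite TRSs over a common finite signature with `SN(R_top/S)`
is Π¹₁-complete. -/
theorem dp_Pi11Complete :
    Pi11Complete { n : ℕ | ∃ (sig : List (ℕ × ℕ)) (R S : List (Term × Term)),
      WFTRS sig R ∧ WFTRS sig S ∧ n = Nat.pair (encodeSig sig) (Nat.pair (encodeTRS R) (encodeTRS S)) ∧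
      SNtop R S } :=
  ⟨pi11_sntop, hard_sntop⟩
end

section
/- Let R and S be term rewriting systems over a common signature. Then SN^min(R_top/S) holds if and only if the relation consisting of all pairs (s,t) such that s (→_{R,ε} ∪ →_S) t and s is →_S-terminating is terminating. -/
theorem Rewrite.sNon {S : List (Term × Term)} {s t : Term} (h : Rewrite S s t)
    (hs : SNon S s) : SNon S t := by
  rintro ⟨f, hf0, hf⟩
  refine hs ⟨fun n => Nat.casesOn n s f, rfl, fun n => ?_⟩
  cases n with
  | zero => simpa [hf0] using h
  | succ n => exact hf n

theorem Reduces.sNon {S : List (Term × Term)} {s t : Term} (h : Reduces S s t)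
    (hs : SNon S s) : SNon S t := by
  induction h with
  | refl => exact hs
  | tail _ hstep ih => exact hstep.sNon ih

/-- The union relation: a root `R`-step or an `S`-step, starting from an
`→_S`-terminating term. -/
def MinUnion (R S : List (Term × Term)) (s t : Term) : Prop :=
  (RootStep R s t ∨ Rewrite S s t) ∧ SNon S s

theorem transGen_of_reduces_rootStep {R S : List (Term × Term)} {s u t : Term}
    (hsu : Reduces S s u) (hut : RootStep R u t) (hs : SNon S s) :
    Relation.TransGen (MinUnion R S) s t := by
  induction hsu using Relation.ReflTransGen.head_induction_on with
  | refl => exact .single ⟨.inl hut, hs⟩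
  | head hstep _ ih => exact .head ⟨.inr hstep, hs⟩ (ih (hstep.sNon hs))

/-- From every position of an infinite sequence of the union relation, finitely many `S`-steps
along the sequence lead to a root `R`-step. -/
theorem exists_next_rootStep {R S : List (Term × Term)} {f : ℕ → Term}
    (hf : ∀ k, MinUnion R S (f k) (f (k + 1))) (k : ℕ) :
    ∃ m, Reduces S (f k) (f m) ∧ RootStep R (f m) (f (m + 1)) := by
  by_contra! hno
  have hred : ∀ n, Reduces S (f k) (f (k + n)) := by
    intro n
    induction n with
    | zero => exact .refl
    | succ n ih => exact ih.tail ((hf (k + n)).1.resolve_left (hno _ ih))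
  exact (hf k).2 ⟨fun n => f (k + n), rfl,
    fun n => (hf (k + n)).1.resolve_left (hno _ (hred n))⟩

/-- `SN^min(R_top/S)` holds iff the relation consisting of all pairs `(s,t)`
with `s (→_{R,ε} ∪ →_S) t` and `s` being `→_S`-terminating, is terminating. -/
theorem snmin_iff_union_terminating
    (sig : List (ℕ × ℕ)) (R S : List (Term × Term))
    (hR : WFTRS sig R) (hS : WFTRS sig S) :
    SNminTop R S ↔
      ¬ ∃ f : ℕ → Term, ∀ k : ℕ,
        (RootStep R (f k) (f (k + 1)) ∨ Rewrite S (f k) (f (k + 1))) ∧ SNon S (f k) := by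
  constructor
  · rintro hmin ⟨f, hf⟩
    choose next hred hroot using exists_next_rootStep (R := R) (S := S) hf
    -- `pos n` is the index in `f` just after the `n`-th selected root step.
    let pos : ℕ → ℕ := fun n => Nat.rec 0 (fun _ k => next k + 1) n
    exact hmin ⟨fun n => f (pos n), fun n =>
      ⟨⟨f (next (pos n)), hred (pos n), hroot (pos n)⟩, (hf (pos n)).2⟩⟩
  · rintro hunion ⟨f, hf⟩
    have hwf : WellFounded (Function.swap (MinUnion R S)) :=
      wellFounded_iff_isEmpty_descending_chain.2 ⟨fun g => hunion ⟨g.1, g.2⟩⟩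
    refine (wellFounded_iff_isEmpty_descending_chain.1 hwf.transGen).false ⟨f, fun k => ?_⟩
    obtain ⟨⟨u, hsu, hut⟩, hs⟩ := hf k
    exact Relation.transGen_swap.2 (transGen_of_reduces_rootStep hsu hut hs)
end
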